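/- There exist a strictly increasing sequence (γ_n) with γ_n² < 2d and γ_n → √(2d), and a sequence of positive reals (λ_n), such that the random variables λ_n · M^{γ_n}([0,1]^d) converge in distribution as n → ∞ to a random variable Z that is almost surely finite and is not almost surely equal to 0 (indeed E[e^{−Z}] = 1/2). Here, for γ² < 2d, M^γ([0,1]^d) denotes the almost sure limit as t → ∞ of the positive martingale M_t^γ([0,1]^d) = ∫_{[0,1]^d} e^{γ·X_t(x) − (γ²/2)·t} dx. -/

import Mathlib

open MeasureTheory ProbabilityTheory Filter

noncomputable section

namespace GMC

open Real Set Topology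
open scoped ENNReal NNReal

abbrev EE (d : ℕ) := EuclideanSpace ℝ (Fin d)

/-- The unit cube. -/
def cube (d : ℕ) : Set (EE d) := {x | ∀ i, x i ∈ Set.Icc (0:ℝ) 1}

/-- Abstract properties of the covariance kernels. -/
structure GK {d : ℕ} (K : ℝ → EE d → ℝ) (R : ℝ) : Prop where
  R0 : 0 < R
  K0 : ∀ s, 0 ≤ s → K s 0 = s
  shift : ∀ s t z, 0 ≤ s → s ≤ t → K t z - K s z = K (t - s) (exp s • z)
  far : ∀ s t z, 0 ≤ s → s ≤ t → R < exp s * ‖z‖ → K t z = K s z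
  le : ∀ s t z, 0 ≤ s → s ≤ t → |K t z - K s z| ≤ t - s

/-- A continuous centered Gaussian field with the right covariances. -/
structure Good {d : ℕ} {Ω : Type*} [MeasurableSpace Ω] (P : Measure Ω)
    (K : ℝ → EE d → ℝ) (X : ℝ → EE d → Ω → ℝ) : Prop where
  meas : ∀ t x, Measurable (X t x)
  cont : ∀ ω, Continuous fun p : ℝ × EE d => X p.1 p.2 ω
  gauss : IsGaussianProcess (fun p : ℝ × EE d => X p.1 p.2) P
  cent : ∀ t x, ∫ ω, X t x ω ∂P = 0
  cov : ∀ s t, 0 ≤ s → s ≤ t → ∀ x y, ∫ ω, X s x ω * X t y ω ∂P = K s (x - y)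

def KK {d : ℕ} (k : EE d → ℝ) (t : ℝ) (z : EE d) : ℝ :=
  ∫ u in Set.Icc (1:ℝ) (Real.exp t), k (u • z) / u

lemma KK_eq {d : ℕ} (k : EE d → ℝ) {t : ℝ} (ht : 0 ≤ t) (z : EE d) :
    KK k t z = ∫ u in (1:ℝ)..(Real.exp t), k (u • z) / u := by
  rw [KK, integral_Icc_eq_integral_Ioc, intervalIntegral.integral_of_le (one_le_exp ht)]

lemma KK_intble {d : ℕ} {k : EE d → ℝ} (hk : Continuous k) (z : EE d) {a b : ℝ} (ha : 0 < a)
    (hb : 0 < b) : IntervalIntegrable (fun u => k (u • z) / u) volume a b := by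
  apply ContinuousOn.intervalIntegrable
  apply ContinuousOn.div (by fun_prop) (by fun_prop)
  intro x hx
  have : 0 < x := lt_of_lt_of_le (lt_min ha hb) hx.1
  exact this.ne'

lemma KK_sub {d : ℕ} {k : EE d → ℝ} (hk : Continuous k) (z : EE d) {s t : ℝ} (hs : 0 ≤ s)
    (ht : s ≤ t) : KK k t z - KK k s z = ∫ u in (exp s)..(exp t), k (u • z) / u := by
  rw [KK_eq k (hs.trans ht), KK_eq k hs, intervalIntegral.integral_interval_sub_left]
  · exact KK_intble hk z one_pos (exp_pos _)
  · exact KK_intble hk z one_pos (exp_pos _)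

lemma gk_of {d : ℕ} {k : EE d → ℝ} (hk : Continuous k) (hk0 : k 0 = 1) (hkb : ∀ z, |k z| ≤ 1)
    (hs : HasCompactSupport k) : ∃ R, GK (KK k) R := by
  obtain ⟨R, hR⟩ := hs.isCompact.isBounded.subset_closedBall 0
  have inv_int : ∀ s t : ℝ, ∫ u in (exp s)..(exp t), (1:ℝ) / u = t - s := by
    intro s t
    rw [integral_one_div_of_pos (exp_pos _) (exp_pos _), ← exp_sub, log_exp]
  refine ⟨max R 1, ⟨by positivity, ?_, ?_, ?_, ?_⟩⟩
  · intro s hs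
    rw [KK_eq k hs]
    have := inv_int 0 s
    simpa [hk0] using this
  · intro s t z hs hst
    rw [KK_sub hk z hs hst, KK_eq k (sub_nonneg.2 hst)]
    have h := intervalIntegral.integral_comp_mul_right (a := 1) (b := exp (t - s))
      (fun u => k (u • z) / u) (exp_pos s).ne'
    rw [one_mul, ← exp_add, sub_add_cancel] at h
    rw [smul_eq_mul, eq_comm, inv_mul_eq_iff_eq_mul₀ (exp_pos s).ne', ← intervalIntegral.integral_const_mul] at h
    rw [h]
    apply intervalIntegral.integral_congr
    intro u hu
    have : 0 < u := lt_of_lt_of_le (lt_min one_pos (exp_pos _)) hu.1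
    simp only [smul_smul]
    field_simp
  · intro s t z hs hst hz
    rw [← sub_eq_zero, KK_sub hk z hs hst]
    rw [intervalIntegral.integral_congr (g := fun _ => (0:ℝ)), intervalIntegral.integral_zero]
    intro u hu
    rw [uIcc_of_le (exp_le_exp.2 hst)] at hu
    have hu0 : 0 < u := (exp_pos s).trans_le hu.1
    have : k (u • z) = 0 := by
      by_contra h
      have h1 := hR (subset_tsupport k h)
      rw [mem_closedBall_zero_iff, norm_smul, Real.norm_of_nonneg hu0.le] at h1
      have h2 : exp s * ‖z‖ ≤ u * ‖z‖ := mul_le_mul_of_nonneg_right hu.1 (norm_nonneg _)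
      have := le_max_left R 1
      linarith
    simp [this]
  · intro s t z hs hst
    rw [KK_sub hk z hs hst, ← inv_int s t, ← Real.norm_eq_abs]
    apply intervalIntegral.norm_integral_le_of_norm_le (exp_le_exp.2 hst)
    · refine Eventually.of_forall fun u hu => ?_
      have hu0 : 0 < u := (exp_pos s).trans hu.1
      rw [norm_div, Real.norm_eq_abs, Real.norm_eq_abs, abs_of_pos hu0]
      gcongr
      exact hkb _
    · apply ContinuousOn.intervalIntegrable
      apply ContinuousOn.div (by fun_prop) (by fun_prop)
      intro x hx
      exact (lt_of_lt_of_le (lt_min (exp_pos _) (exp_pos _)) hx.1).ne'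

section reduction
variable {d : ℕ} {Ω : Type*} [m0 : MeasurableSpace Ω] {P : Measure Ω} [IsProbabilityMeasure P]

lemma gaussProc {X : ℝ → EE d → Ω → ℝ} (hXmeas : ∀ t x, Measurable (X t x))
    (hXgauss : ∀ (n : ℕ) (c : Fin n → ℝ) (t : Fin n → ℝ) (x : Fin n → EE d),
      ∃ v : NNReal,
        Measure.map (fun ω => ∑ i, c i * X (t i) (x i) ω) P = gaussianReal 0 v) :
    IsGaussianProcess (fun p : ℝ × EE d => X p.1 p.2) P := by
  classical
  refine ⟨fun I => ⟨?_⟩⟩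
  apply isGaussian_of_map_eq_gaussianReal
  intro L
  let e := I.equivFin
  obtain ⟨v, hv⟩ := hXgauss I.card (fun i => L (Pi.single (e.symm i) 1))
    (fun i => (e.symm i).1.1) (fun i => (e.symm i).1.2)
  refine ⟨0, v, ?_⟩
  have hm : Measurable (fun ω => I.restrict fun x : ℝ × EE d => X x.1 x.2 ω) :=
    measurable_pi_lambda _ fun i => hXmeas _ _
  rw [← hv, Measure.map_map (by fun_prop) hm]
  congr 1
  ext ω
  simp only [Function.comp]
  rw [Fintype.sum_equiv e.symm _ (fun i : I => L (Pi.single i 1) * X i.1.1 i.1.2 ω) (fun _ => rfl)]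
  conv_lhs => rw [← L.sum_comp_single]
  refine Finset.sum_congr rfl fun i _ => ?_
  have : (ContinuousLinearMap.single ℝ (fun _ : I => ℝ) i) (X i.1.1 i.1.2 ω)
    = X i.1.1 i.1.2 ω • (Pi.single i (1:ℝ)) := by
    ext j
    by_cases h : j = i
    · subst h; simp
    · simp [h]
  rw [Finset.restrict_def]
  change L ((ContinuousLinearMap.single ℝ (fun _ : I => ℝ) i) (X i.1.1 i.1.2 ω)) = _
  rw [this, map_smul, smul_eq_mul, mul_comm]

lemma reduce {k : EE d → ℝ} {X : ℝ → EE d → Ω → ℝ}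
    (hXmeas : ∀ t x, Measurable (X t x))
    (hXgauss : ∀ (n : ℕ) (c : Fin n → ℝ) (t : Fin n → ℝ)
        (x : Fin n → EuclideanSpace ℝ (Fin d)),
      ∃ v : NNReal,
        Measure.map (fun ω => ∑ i, c i * X (t i) (x i) ω) P = gaussianReal 0 v)
    (hXcent : ∀ t x, ∫ ω, X t x ω ∂P = 0)
    (hXcov : ∀ t, 0 ≤ t → ∀ x y : EuclideanSpace ℝ (Fin d),
      ∫ ω, X t x ω * X t y ω ∂P = ∫ u in Set.Icc (1:ℝ) (Real.exp t), k (u • (x - y)) / u)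
    (hXcont : ∀ᵐ ω ∂P, Continuous fun p : ℝ × EuclideanSpace ℝ (Fin d) => X p.1 p.2 ω)
    (hXindep : ∀ s t : ℝ, 0 ≤ s → s < t →
      Indep (⨆ x : EuclideanSpace ℝ (Fin d),
          MeasurableSpace.comap (fun ω => X t x ω - X s x ω) inferInstance)
        (⨆ u ∈ Set.Icc (0:ℝ) s, ⨆ x : EuclideanSpace ℝ (Fin d),
          MeasurableSpace.comap (X u x) inferInstance) P) :
    ∃ Y : ℝ → EE d → Ω → ℝ, Good P (KK k) Y ∧ ∀ᵐ ω ∂P, ∀ t x, Y t x ω = X t x ω := by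
  classical
  have hG := gaussProc hXmeas hXgauss
  have hL2 : ∀ t x, MemLp (X t x) 2 P := fun t x => (hG.hasGaussianLaw_eval (t, x)).memLp_two
  have hcov : ∀ s t, 0 ≤ s → s ≤ t → ∀ x y, ∫ ω, X s x ω * X t y ω ∂P = KK k s (x - y) := by
    intro s t hs hst x y
    rcases hst.eq_or_lt with rfl | hst
    · exact hXcov s hs x y
    have hind : IndepFun (X s x) (fun ω => X t y ω - X s y ω) P := by
      rw [IndepFun_iff_Indep]
      apply Indep.symm
      apply indep_of_indep_of_le_left
      apply indep_of_indep_of_le_right (hXindep s t hs hst)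
      · exact le_iSup₂_of_le s ⟨hs, le_rfl⟩ (le_iSup (fun x => MeasurableSpace.comap (X s x) inferInstance) x)
      · exact le_iSup (fun x => MeasurableSpace.comap (fun ω => X t x ω - X s x ω) inferInstance) y
    have h0 := hind.integral_fun_mul_eq_mul_integral (hXmeas s x).aestronglyMeasurable
      ((hXmeas t y).sub (hXmeas s y)).aestronglyMeasurable
    rw [hXcent, zero_mul] at h0
    have h1 : ∀ ω, X s x ω * X t y ω = X s x ω * X s y ω + X s x ω * (X t y ω - X s y ω) := by
      intro ω; ring
    simp_rw [h1]
    rw [integral_add, h0, add_zero, hXcov s hs x y]; rfl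
    · exact (hL2 s x).integrable_mul (hL2 s y)
    · exact (hL2 s x).integrable_mul ((hL2 t y).sub (hL2 s y))
  obtain ⟨N, hN1, hN2, hN3⟩ := exists_measurable_superset_of_null hXcont
  let Y : ℝ → EE d → Ω → ℝ := fun t x ω => if ω ∈ N then 0 else X t x ω
  have hae : ∀ᵐ ω ∂P, ∀ t x, Y t x ω = X t x ω := by
    have : ∀ᵐ ω ∂P, ω ∉ N := measure_eq_zero_iff_ae_notMem.1 hN3
    filter_upwards [this] with ω hω t x
    simp [Y, hω]
  have hae' : ∀ t x, Y t x =ᵐ[P] X t x := fun t x => hae.mono fun ω h => h t x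
  refine ⟨Y, ⟨?_, ?_, ?_, ?_, ?_⟩, hae⟩
  · exact fun t x => Measurable.ite hN2 measurable_const (hXmeas t x)
  · intro ω
    by_cases h : ω ∈ N
    · simp only [Y, h, if_true]; exact continuous_const
    · simp only [Y, h, if_false]
      by_contra hc
      exact h (hN1 hc)
  · exact hG.congr fun p => (hae' p.1 p.2).symm
  · intro t x
    rw [integral_congr_ae (hae' t x), hXcent]
  · intro s t hs hst x y
    rw [← hcov s t hs hst x y]
    exact integral_congr_ae ((hae' s x).mul (hae' t y))

end reduction

end GMC

namespace GMC

open Real Set Topology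
open scoped ENNReal NNReal

set_option linter.unusedSectionVars false

section gaussgen
variable {Ω : Type*} [m0 : MeasurableSpace Ω] {P : Measure Ω} [IsProbabilityMeasure P]

lemma imul {f g : Ω → ℝ} (hf : MemLp f 2 P) (hg : MemLp g 2 P) :
    Integrable (fun ω => f ω * g ω) P := hf.integrable_mul hg

lemma gauss_comb {S T : Type*} {X : T → Ω → ℝ} (hX : IsGaussianProcess X P) (c1 c2 : S → ℝ)
    (f1 f2 : S → T) :
    IsGaussianProcess (fun s ω => c1 s * X (f1 s) ω + c2 s * X (f2 s) ω) P := by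
  classical
  apply hX.of_isGaussianProcess
  intro s
  refine ⟨{f1 s, f2 s}, c1 s • ContinuousLinearMap.proj ⟨f1 s, by simp⟩
    + c2 s • ContinuousLinearMap.proj ⟨f2 s, by simp⟩, fun ω => ?_⟩
  simp

lemma gauss_mgf {g : Ω → ℝ} (hg : HasGaussianLaw g P) (h0 : ∫ ω, g ω ∂P = 0) {v : ℝ}
    (hv : ∫ ω, g ω * g ω ∂P = v) (θ : ℝ) :
    Integrable (fun ω => exp (θ * g ω)) P ∧ ∫ ω, exp (θ * g ω) ∂P = exp (θ ^ 2 * v / 2) := by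
  have h := hg.map_eq_gaussianReal
  have hvar : Var[g; P] = v := by
    rw [← covariance_self hg.aemeasurable, covariance_eq_sub hg.memLp_two hg.memLp_two, h0]
    simpa using hv
  have hv0 : 0 ≤ v := hvar ▸ variance_nonneg _ _
  rw [h0, hvar] at h
  constructor
  · have := integrable_exp_mul_gaussianReal (μ := 0) (v := v.toNNReal) θ
    rw [← h] at this
    exact (integrable_map_measure (by fun_prop) hg.aemeasurable).1 this
  · have := mgf_gaussianReal h θ
    rw [mgf] at this
    rw [this, Real.coe_toNNReal _ hv0]
    congr 1; ring

lemma gauss_ident {T : Type*} {U V : T → Ω → ℝ} (hU : IsGaussianProcess U P)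
    (hV : IsGaussianProcess V P) (mU : ∀ t, Measurable (U t)) (mV : ∀ t, Measurable (V t))
    (cU : ∀ t, ∫ ω, U t ω ∂P = 0) (cV : ∀ t, ∫ ω, V t ω ∂P = 0)
    (hc : ∀ s t, ∫ ω, U s ω * U t ω ∂P = ∫ ω, V s ω * V t ω ∂P) :
    IdentDistrib (fun ω t => U t ω) (fun ω t => V t ω) P P := by
  classical
  have mU' : Measurable (fun ω t => U t ω) := measurable_pi_lambda _ mU
  have mV' : Measurable (fun ω t => V t ω) := measurable_pi_lambda _ mV
  rw [identDistrib_iff_forall_finset_identDistrib mU'.aemeasurable mV'.aemeasurable]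
  intro I
  have mUI : Measurable (fun ω => I.restrict (U · ω)) := measurable_pi_lambda _ fun i => mU _
  have mVI : Measurable (fun ω => I.restrict (V · ω)) := measurable_pi_lambda _ fun i => mV _
  refine ⟨mUI.aemeasurable, mVI.aemeasurable, ?_⟩
  have key : ∀ (W : T → Ω → ℝ) (hW : IsGaussianProcess W P) (cW : ∀ t, ∫ ω, W t ω ∂P = 0)
      (L : StrongDual ℝ (I → ℝ)),
      ∫ ω, L (I.restrict (W · ω)) ∂P = 0 ∧
      Var[fun ω => L (I.restrict (W · ω)); P] =
        ∑ i : I, ∑ j : I, L (Pi.single i 1) * (L (Pi.single j 1) * ∫ ω, W i ω * W j ω ∂P) := by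
    intro W hW cW L
    have hL2 : ∀ t, MemLp (W t) 2 P := fun t => (hW.hasGaussianLaw_eval t).memLp_two
    have hL : (fun ω => L (I.restrict (W · ω))) =
        fun ω => ∑ i : I, L (Pi.single i 1) * W i ω := by
      ext ω
      conv_lhs => rw [← L.sum_comp_single]
      refine Finset.sum_congr rfl fun i _ => ?_
      have : (ContinuousLinearMap.single ℝ (fun _ : I => ℝ) i) (W i ω)
        = W i ω • (Pi.single i (1:ℝ)) := by
        ext j
        by_cases h : j = i
        · subst h; simp
        · simp [h]
      change L ((ContinuousLinearMap.single ℝ (fun _ : I => ℝ) i) (W i ω)) = _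
      rw [this, map_smul, smul_eq_mul, mul_comm]
    have hi : ∀ i : I, MemLp (fun ω => L (Pi.single i 1) * W i ω) 2 P :=
      fun i => (hL2 i).const_mul _
    constructor
    · rw [hL, integral_finsetSum _ fun i _ => (hi i).integrable (by norm_num)]
      simp [integral_const_mul, cW]
    · rw [hL, ← covariance_self (memLp_finsetSum _ fun i _ => hi i).aemeasurable,
        covariance_fun_sum_fun_sum hi hi]
      refine Finset.sum_congr rfl fun i _ => Finset.sum_congr rfl fun j _ => ?_
      rw [covariance_const_mul_left, covariance_const_mul_right,
        covariance_eq_sub (hL2 _) (hL2 _), cW, zero_mul, sub_zero]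
      rfl
  apply Measure.ext_of_charFunDual
  ext L
  rw [(hU.hasGaussianLaw I).charFunDual_map_eq_fun, (hV.hasGaussianLaw I).charFunDual_map_eq_fun]
  rw [(key U hU cU L).2, (key V hV cV L).2,
    (key U hU cU L).1, (key V hV cV L).1]
  simp_rw [hc]

end gaussgen

section field
variable {d : ℕ} {Ω : Type*} [m0 : MeasurableSpace Ω] {P : Measure Ω} [IsProbabilityMeasure P]
  {K : ℝ → EE d → ℝ} {X : ℝ → EE d → Ω → ℝ} {R : ℝ}

namespace Good

lemma gl (hX : Good P K X) (t : ℝ) (x : EE d) : HasGaussianLaw (X t x) P :=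
  hX.gauss.hasGaussianLaw_eval (t, x)

lemma memLp (hX : Good P K X) (t : ℝ) (x : EE d) : MemLp (X t x) 2 P :=
  (hX.gl t x).memLp_two

lemma Ksymm (hX : Good P K X) {s : ℝ} (hs : 0 ≤ s) (x y : EE d) : K s (x - y) = K s (y - x) := by
  rw [← hX.cov s s hs le_rfl, ← hX.cov s s hs le_rfl]
  simp_rw [mul_comm]

lemma inc_cent (hX : Good P K X) (s t : ℝ) (x : EE d) : ∫ ω, (X t x ω - X s x ω) ∂P = 0 := by
  rw [integral_sub ((hX.memLp t x).integrable (by norm_num))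
    ((hX.memLp s x).integrable (by norm_num)), hX.cent, hX.cent, sub_zero]

lemma inc_gl (hX : Good P K X) (s t : ℝ) (x : EE d) :
    HasGaussianLaw (fun ω => X t x ω - X s x ω) P :=
  hX.gauss.hasGaussianLaw_fun_sub (s := (t, x)) (t := (s, x))

lemma inc_memLp (hX : Good P K X) (s t : ℝ) (x : EE d) :
    MemLp (fun ω => X t x ω - X s x ω) 2 P := (hX.inc_gl s t x).memLp_two

lemma past_cov (hX : Good P K X) {u s t : ℝ} (hu : 0 ≤ u) (hus : u ≤ s) (hst : s ≤ t)
    (x y : EE d) : ∫ ω, X u x ω * (X t y ω - X s y ω) ∂P = 0 := by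
  simp_rw [mul_sub]
  rw [integral_sub (imul (hX.memLp u x) (hX.memLp t y))
    (imul (hX.memLp u x) (hX.memLp s y)), hX.cov u t hu (hus.trans hst),
    hX.cov u s hu hus, sub_self]

lemma inc_cov (hX : Good P K X) {s t : ℝ} (hs : 0 ≤ s) (hst : s ≤ t)
    (x y : EE d) : ∫ ω, (X t x ω - X s x ω) * (X t y ω - X s y ω) ∂P =
      K t (x - y) - K s (x - y) := by
  simp_rw [sub_mul]
  rw [integral_sub (imul (hX.memLp t x) (hX.inc_memLp s t y))
    (imul (hX.memLp s x) (hX.inc_memLp s t y)),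
    hX.past_cov hs le_rfl hst, sub_zero]
  simp_rw [mul_sub]
  rw [integral_sub (imul (hX.memLp t x) (hX.memLp t y))
    (imul (hX.memLp t x) (hX.memLp s y)), hX.cov t t (hs.trans hst) le_rfl]
  have : ∫ ω, X t x ω * X s y ω ∂P = K s (x - y) := by
    rw [hX.Ksymm hs, ← hX.cov s t hs hst]
    simp_rw [mul_comm]
  rw [this]

/-- Exponential moments of one point. -/
lemma mgf1 (hK : GK K R) (hX : Good P K X) {t : ℝ} (ht : 0 ≤ t) (x : EE d) (θ : ℝ) :
    Integrable (fun ω => exp (θ * X t x ω)) P ∧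
      ∫ ω, exp (θ * X t x ω) ∂P = exp (θ ^ 2 * t / 2) := by
  apply gauss_mgf (hX.gl t x) (hX.cent t x)
  rw [hX.cov t t ht le_rfl, sub_self, hK.K0 t ht]

lemma mgf_inc (hK : GK K R) (hX : Good P K X) {s t : ℝ} (hs : 0 ≤ s) (hst : s ≤ t) (x : EE d)
    (θ : ℝ) :
    Integrable (fun ω => exp (θ * (X t x ω - X s x ω))) P ∧
      ∫ ω, exp (θ * (X t x ω - X s x ω)) ∂P = exp (θ ^ 2 * (t - s) / 2) := by
  apply gauss_mgf (hX.inc_gl s t x) (hX.inc_cent s t x)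
  rw [hX.inc_cov hs hst, sub_self, hK.K0 t (hs.trans hst), hK.K0 s hs]

lemma mgf_inc2 (hK : GK K R) (hX : Good P K X) {s t : ℝ} (hs : 0 ≤ s) (hst : s ≤ t) (x y : EE d)
    (θ : ℝ) :
    Integrable (fun ω => exp (θ * ((X t x ω - X s x ω) + (X t y ω - X s y ω)))) P ∧
      ∫ ω, exp (θ * ((X t x ω - X s x ω) + (X t y ω - X s y ω))) ∂P =
        exp (θ ^ 2 * (t - s) + θ ^ 2 * (K t (x - y) - K s (x - y))) := by
  have hg : HasGaussianLaw (fun ω => (X t x ω - X s x ω) + (X t y ω - X s y ω)) P := by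
    have h := gauss_comb hX.gauss (fun _ : EE d => 1) (fun _ => -1) (fun x => (t, x))
      (fun x => (s, x))
    have := h.hasGaussianLaw_fun_add (s := x) (t := y)
    have e : (fun ω => (X t x ω - X s x ω) + (X t y ω - X s y ω)) = fun ω => (1 * X t x ω + -1 * X s x ω) + (1 * X t y ω + -1 * X s y ω) := by
      ext ω; ring
    rw [e]
    exact this
  have i1 := hX.inc_memLp s t x
  have i2 := hX.inc_memLp s t y
  have h := gauss_mgf hg (v := 2 * (t - s) + 2 * (K t (x - y) - K s (x - y))) ?_ ?_ θ
  · refine ⟨h.1, h.2.trans ?_⟩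
    congr 1; ring
  · rw [integral_add (i1.integrable (by norm_num)) (i2.integrable (by norm_num)),
      hX.inc_cent, hX.inc_cent, add_zero]
  · have e : ∀ ω, ((X t x ω - X s x ω) + (X t y ω - X s y ω)) *
        ((X t x ω - X s x ω) + (X t y ω - X s y ω)) =
        ((X t x ω - X s x ω) * (X t x ω - X s x ω) + (X t y ω - X s y ω) * (X t y ω - X s y ω))
        + 2 * ((X t x ω - X s x ω) * (X t y ω - X s y ω)) := by intro ω; ring
    simp_rw [e]
    have j1 := imul i1 i1
    have j2 := imul i2 i2
    have j3 := imul i1 i2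
    rw [integral_add (j1.fun_add j2) (j3.const_mul 2), integral_add j1 j2, integral_const_mul,
      hX.inc_cov hs hst, hX.inc_cov hs hst, hX.inc_cov hs hst, sub_self, sub_self,
      hK.K0 t (hs.trans hst), hK.K0 s hs]
    ring

/-- The past is independent of the increments. -/
lemma indep_past (hX : Good P K X) {s t : ℝ} (hst : s ≤ t) :
    IndepFun (fun ω (p : Icc (0:ℝ) s × EE d) => X p.1 p.2 ω)
      (fun ω (x : EE d) => X t x ω - X s x ω) P := by
  apply IsGaussianProcess.indepFun_of_covariance_eq_zero
    (X := fun (p : Icc (0:ℝ) s × EE d) ω => X p.1 p.2 ω)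
    (Y := fun (x : EE d) ω => X t x ω - X s x ω)
  · have := gauss_comb hX.gauss
      (Sum.elim (fun _ : Icc (0:ℝ) s × EE d => 1) (fun _ : EE d => 1))
      (Sum.elim (fun _ : Icc (0:ℝ) s × EE d => 0) (fun _ : EE d => -1))
      (Sum.elim (fun p : Icc (0:ℝ) s × EE d => ((p.1 : ℝ), p.2)) (fun x : EE d => (t, x)))
      (Sum.elim (fun p : Icc (0:ℝ) s × EE d => ((p.1 : ℝ), p.2)) (fun x : EE d => (s, x)))
    convert this using 1
    ext p ω
    rcases p with p | p
    · simp
    · simp; ring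
  · exact fun p => (hX.meas _ _).aemeasurable
  · exact fun p => ((hX.meas _ _).sub (hX.meas _ _)).aemeasurable
  · intro p y
    rw [covariance_eq_sub (hX.memLp _ _) (hX.inc_memLp _ _ _), hX.inc_cent, mul_zero, sub_zero]
    exact hX.past_cov p.1.2.1 p.1.2.2 hst p.2 y

lemma indep_far (hK : GK K R) (hX : Good P K X) {s t : ℝ} (hs : 0 ≤ s) (hst : s ≤ t) {N : ℕ}
    (ψ : Fin N → cube d → EE d)
    (hψ : ∀ i j, i ≠ j → ∀ z w, R < exp s * ‖ψ i z - ψ j w‖) :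
    iIndepFun (fun (i : Fin N) ω (z : cube d) => X t (ψ i z) ω - X s (ψ i z) ω) P := by
  apply IsGaussianProcess.iIndepFun_of_covariance_eq_zero
    (X := fun (i : Fin N) (z : cube d) ω => X t (ψ i z) ω - X s (ψ i z) ω)
  · have := gauss_comb hX.gauss
      (fun p : (_ : Fin N) × cube d => 1) (fun p => -1) (fun p => (t, ψ p.1 p.2))
      (fun p => (s, ψ p.1 p.2))
    convert this using 3
    ring
  · exact fun i z => ((hX.meas _ _).sub (hX.meas _ _)).aemeasurable
  · intro i j hij z w
    rw [covariance_eq_sub (hX.inc_memLp _ _ _) (hX.inc_memLp _ _ _), hX.inc_cent, zero_mul,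
      sub_zero]
    refine (hX.inc_cov hs hst _ _).trans ?_
    rw [hK.far s t _ hs hst (hψ i j hij z w), sub_self]

lemma ident_scale (hK : GK K R) (hX : Good P K X) {s t : ℝ} (hs : 0 ≤ s) (hst : s ≤ t)
    (a : EE d) :
    IdentDistrib (fun ω (z : cube d) => X t (a + exp (-s) • (z : EE d)) ω -
        X s (a + exp (-s) • (z : EE d)) ω)
      (fun ω (z : cube d) => X (t - s) z ω) P P := by
  apply gauss_ident (U := fun (z : cube d) ω => X t (a + exp (-s) • (z : EE d)) ω -
        X s (a + exp (-s) • (z : EE d)) ω) (V := fun (z : cube d) ω => X (t - s) z ω)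
  · have := gauss_comb hX.gauss
      (fun p : cube d => 1) (fun p => -1) (fun p => (t, a + exp (-s) • (p : EE d)))
      (fun p => (s, a + exp (-s) • (p : EE d)))
    convert this using 3
    ring
  · exact hX.gauss.comp_right (fun z : cube d => (t - s, (z : EE d)))
  · exact fun z => (hX.meas _ _).sub (hX.meas _ _)
  · exact fun z => hX.meas _ _
  · exact fun z => hX.inc_cent _ _ _
  · exact fun z => hX.cent _ _
  · intro z w
    rw [hX.inc_cov hs hst, hX.cov _ _ (sub_nonneg.2 hst) le_rfl, hK.shift _ _ _ hs hst]
    congr 1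
    rw [add_sub_add_left_eq_sub, ← smul_sub, smul_smul, ← exp_add]
    simp

end Good
end field

end GMC

namespace GMC

open Real Set Topology
open scoped ENNReal NNReal

set_option linter.unusedSectionVars false

lemma cube_eq (d : ℕ) : cube d = (MeasurableEquiv.toLp 2 (Fin d → ℝ)).symm ⁻¹' (Set.univ.pi fun _ => Icc (0:ℝ) 1) := by
  ext x
  simp [cube, Pi.le_def, forall_and]

lemma cube_compact (d : ℕ) : IsCompact (cube d) := by
  rw [cube_eq]
  have : IsCompact (Set.univ.pi fun _ : Fin d => Icc (0:ℝ) 1) := isCompact_univ_pi fun _ => isCompact_Icc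
  exact (PiLp.homeomorph 2 (fun _ : Fin d => ℝ)).isCompact_preimage.2 this

lemma cube_meas (d : ℕ) : MeasurableSet (cube d) := (cube_compact d).measurableSet

lemma cube_vol (d : ℕ) : volume (cube d) = 1 := by
  rw [cube_eq, (EuclideanSpace.volume_preserving_symm_measurableEquiv_toLp (Fin d)).measure_preimage_equiv]
  rw [volume_pi_pi]
  simp

/-- Lebesgue measure on the cube. -/
def mu (d : ℕ) : Measure (EE d) := volume.restrict (cube d)

instance (d : ℕ) : IsProbabilityMeasure (mu d) := ⟨by simp [mu, cube_vol]⟩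

lemma mu_ae (d : ℕ) : ∀ᵐ x ∂(mu d), x ∈ cube d := ae_restrict_mem (cube_meas d)

lemma cont_int {d : ℕ} {f : EE d → ℝ} (hf : Continuous f) : Integrable f (mu d) :=
  hf.continuousOn.integrableOn_compact (cube_compact d)

section fubini
variable {Ω : Type*} [m0 : MeasurableSpace Ω] {P : Measure Ω} [IsProbabilityMeasure P]

lemma fub {S : Type*} [MeasurableSpace S] {m : Measure S} [IsProbabilityMeasure m]
    {f : S → Ω → ℝ} (hf : Measurable (Function.uncurry f)) {C : ℝ}
    (hi : ∀ x, Integrable (f x) P) (hC : ∀ x, ∫ ω, |f x ω| ∂P ≤ C) :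
    Integrable (Function.uncurry f) (m.prod P) ∧ Integrable (fun ω => ∫ x, f x ω ∂m) P ∧
    ∫ ω, |∫ x, f x ω ∂m| ∂P ≤ ∫ x, ∫ ω, |f x ω| ∂P ∂m ∧
    ∫ ω, ∫ x, f x ω ∂m ∂P = ∫ x, ∫ ω, f x ω ∂P ∂m ∧
    Integrable (fun x => ∫ ω, |f x ω| ∂P) m := by
  have hC0 : ∀ x, 0 ≤ ∫ ω, |f x ω| ∂P := fun x => integral_nonneg fun _ => abs_nonneg _
  have i0 : Integrable (fun x => ∫ ω, |f x ω| ∂P) m := by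
    refine Integrable.of_bound (C := C) ?_ (ae_of_all _ fun x => ?_)
    · have : StronglyMeasurable (Function.uncurry fun x ω => |f x ω|) :=
        (continuous_abs.measurable.comp hf).stronglyMeasurable
      exact this.integral_prod_right.aestronglyMeasurable
    · rw [norm_of_nonneg (hC0 x)]; exact hC x
  have i1 : Integrable (Function.uncurry f) (m.prod P) := by
    rw [integrable_prod_iff hf.aestronglyMeasurable]
    exact ⟨ae_of_all _ hi, i0⟩
  refine ⟨i1, i1.integral_prod_right, ?_, ?_, i0⟩
  · have i2 : Integrable (Function.uncurry fun x ω => |f x ω|) (m.prod P) := i1.abs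
    rw [integral_integral_swap i2]
    refine integral_mono i1.integral_prod_right.abs i2.integral_prod_right fun ω => ?_
    exact abs_integral_le_integral_abs
  · exact (integral_integral_swap i1).symm

end fubini

section field
variable {d : ℕ} {Ω : Type*} [m0 : MeasurableSpace Ω] {P : Measure Ω} [IsProbabilityMeasure P]
  {K : ℝ → EE d → ℝ} {X : ℝ → EE d → Ω → ℝ} {R : ℝ}

/-- density -/
def D (γ : ℝ) (X : ℝ → EE d → Ω → ℝ) (t : ℝ) (x : EE d) (ω : Ω) : ℝ :=
  exp (γ * X t x ω - γ ^ 2 / 2 * t)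

/-- density of the increment -/
def G (γ : ℝ) (X : ℝ → EE d → Ω → ℝ) (s t : ℝ) (x : EE d) (ω : Ω) : ℝ :=
  exp (γ * (X t x ω - X s x ω) - γ ^ 2 / 2 * (t - s))

/-- total mass -/
def M (γ : ℝ) (X : ℝ → EE d → Ω → ℝ) (t : ℝ) (ω : Ω) : ℝ := ∫ x, D γ X t x ω ∂(mu d)

lemma D_pos (γ t : ℝ) (x : EE d) (ω : Ω) : 0 < D γ X t x ω := exp_pos _
lemma G_pos (γ s t : ℝ) (x : EE d) (ω : Ω) : 0 < G γ X s t x ω := exp_pos _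

lemma M_nonneg (γ t : ℝ) (ω : Ω) : 0 ≤ M γ X t ω := integral_nonneg fun _ => (exp_pos _).le

lemma D_mul (γ s t : ℝ) (x : EE d) (ω : Ω) : D γ X t x ω = D γ X s x ω * G γ X s t x ω := by
  rw [D, D, G, ← exp_add]; congr 1; ring

namespace Good

lemma jm (hX : Good P K X) (t : ℝ) : Measurable (Function.uncurry (X t)) := by
  apply measurable_uncurry_of_continuous_of_measurable
  · intro ω; have := hX.cont ω; fun_prop
  · exact hX.meas t

lemma cont_x (hX : Good P K X) (t : ℝ) (ω : Ω) : Continuous fun x => X t x ω := by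
  have := hX.cont ω; fun_prop

lemma jmD (hX : Good P K X) (γ t : ℝ) : Measurable (Function.uncurry (D γ X t)) := by
  have := hX.jm t
  have h : Function.uncurry (D γ X t) =
    fun p => exp (γ * Function.uncurry (X t) p - γ ^ 2 / 2 * t) := rfl
  rw [h]; fun_prop

lemma jmG (hX : Good P K X) (γ s t : ℝ) : Measurable (Function.uncurry (G γ X s t)) := by
  have := hX.jm t
  have := hX.jm s
  have h : Function.uncurry (G γ X s t) = fun p => exp (γ * (Function.uncurry (X t) p -
    Function.uncurry (X s) p) - γ ^ 2 / 2 * (t - s)) := rfl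
  rw [h]; fun_prop

lemma D_cont (hX : Good P K X) (γ t : ℝ) (ω : Ω) : Continuous fun x => D γ X t x ω := by
  have := hX.cont_x t ω
  unfold D; fun_prop

lemma M_meas (hX : Good P K X) (γ t : ℝ) : Measurable (M γ X t) :=
  (StronglyMeasurable.integral_prod_left (f := D γ X t)
    (hX.jmD γ t).stronglyMeasurable).measurable

lemma D_mom (hK : GK K R) (hX : Good P K X) (γ : ℝ) {t : ℝ} (ht : 0 ≤ t) (x : EE d) (p : ℝ) :
    Integrable (fun ω => D γ X t x ω ^ p) P ∧
    ∫ ω, D γ X t x ω ^ p ∂P = exp (p * (p - 1) * γ ^ 2 / 2 * t) := by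
  have e : ∀ ω, D γ X t x ω ^ p = exp (- (p * γ ^ 2 / 2 * t)) * exp (p * γ * X t x ω) := by
    intro ω
    rw [D, ← exp_mul, ← exp_add]; congr 1; ring
  obtain ⟨i, h⟩ := hX.mgf1 hK ht x (p * γ)
  simp_rw [e]
  refine ⟨i.const_mul _, ?_⟩
  rw [integral_const_mul, h, ← exp_add]
  congr 1; ring

lemma D_int (hK : GK K R) (hX : Good P K X) (γ : ℝ) {t : ℝ} (ht : 0 ≤ t) (x : EE d) :
    Integrable (D γ X t x) P ∧ ∫ ω, D γ X t x ω ∂P = 1 := by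
  simpa using hX.D_mom hK γ ht x 1

lemma G_int (hK : GK K R) (hX : Good P K X) (γ : ℝ) {s t : ℝ} (hs : 0 ≤ s) (hst : s ≤ t)
    (x : EE d) :
    Integrable (G γ X s t x) P ∧ ∫ ω, G γ X s t x ω ∂P = 1 := by
  have e : ∀ ω, G γ X s t x ω = exp (- (γ ^ 2 / 2 * (t - s))) * exp (γ * (X t x ω - X s x ω)) := by
    intro ω
    rw [G, ← exp_add]; congr 1; ring
  obtain ⟨i, h⟩ := hX.mgf_inc hK hs hst x γ
  have e' : G γ X s t x = fun ω => exp (- (γ ^ 2 / 2 * (t - s))) * exp (γ * (X t x ω - X s x ω)) :=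
    funext e
  rw [e']
  refine ⟨i.const_mul _, ?_⟩
  rw [integral_const_mul, h, ← exp_add, ← exp_zero]
  congr 1; ring

lemma GG_int (hK : GK K R) (hX : Good P K X) (γ : ℝ) {s t : ℝ} (hs : 0 ≤ s) (hst : s ≤ t)
    (x y : EE d) :
    Integrable (fun ω => G γ X s t x ω * G γ X s t y ω) P ∧
    ∫ ω, G γ X s t x ω * G γ X s t y ω ∂P = exp (γ ^ 2 * (K t (x - y) - K s (x - y))) := by
  have e : ∀ ω, G γ X s t x ω * G γ X s t y ω = exp (- (γ ^ 2 * (t - s))) *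
      exp (γ * ((X t x ω - X s x ω) + (X t y ω - X s y ω))) := by
    intro ω
    rw [G, G, ← exp_add, ← exp_add]; congr 1; ring
  obtain ⟨i, h⟩ := hX.mgf_inc2 hK hs hst x y γ
  simp_rw [e]
  refine ⟨i.const_mul _, ?_⟩
  rw [integral_const_mul, h, ← exp_add]
  congr 1; ring

lemma M_int (hK : GK K R) (hX : Good P K X) (γ : ℝ) {t : ℝ} (ht : 0 ≤ t) :
    Integrable (M γ X t) P ∧ ∫ ω, M γ X t ω ∂P = 1 := by
  have h := fub (P := P) (m := mu d) (f := D γ X t) (hX.jmD γ t) (C := 1)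
    (fun x => (hX.D_int hK γ ht x).1) (fun x => by
      simp_rw [abs_of_pos (D_pos _ _ _ _)]; exact (hX.D_int hK γ ht x).2.le)
  refine ⟨h.2.1, h.2.2.2.1.trans ?_⟩
  simp_rw [(hX.D_int hK γ ht _).2]
  simp

/-- independence of functions of the past at `s` and of the increments -/
lemma ind1 (hX : Good P K X) {s t : ℝ} (hs : 0 ≤ s) (hst : s ≤ t)
    {u : (EE d → ℝ) → ℝ} {v : (EE d → ℝ) → ℝ} (hu : Measurable u) (hv : Measurable v) :
    IndepFun (fun ω => u (fun x => X s x ω)) (fun ω => v (fun x => X t x ω - X s x ω)) P := by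
  have := (hX.indep_past hst).comp
    (φ := fun f : (Icc (0:ℝ) s × EE d → ℝ) => u (fun x => f (⟨s, hs, le_rfl⟩, x))) (ψ := v)
    (hu.comp (measurable_pi_lambda _ fun x => measurable_pi_apply _)) hv
  exact this

end Good
end field
end GMC

namespace GMC

open Real Set Topology
open scoped ENNReal NNReal

set_option linter.unusedSectionVars false

section field
variable {d : ℕ} {Ω : Type*} [m0 : MeasurableSpace Ω] {P : Measure Ω} [IsProbabilityMeasure P]
  {K : ℝ → EE d → ℝ} {X : ℝ → EE d → Ω → ℝ} {R : ℝ}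

lemma near_int (r : ℝ) : ∫ p, indicator {p : EE d × EE d | ‖p.1 - p.2‖ ≤ r} (fun _ => (1:ℝ)) p
    ∂((mu d).prod (mu d)) ≤ (volume (Metric.closedBall (0 : EE d) r)).toReal := by
  have hm : MeasurableSet {p : EE d × EE d | ‖p.1 - p.2‖ ≤ r} :=
    measurableSet_le (by fun_prop) (by fun_prop)
  rw [integral_prod _ ((integrable_const _).indicator hm)]
  have h : ∀ x : EE d, ∫ y, indicator {p : EE d × EE d | ‖p.1 - p.2‖ ≤ r} (fun _ => (1:ℝ)) (x, y)
      ∂(mu d) ≤ (volume (Metric.closedBall (0 : EE d) r)).toReal := by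
    intro x
    have e : (fun y => indicator {p : EE d × EE d | ‖p.1 - p.2‖ ≤ r} (fun _ => (1:ℝ)) (x, y))
        = indicator (Metric.closedBall x r) (fun _ => (1:ℝ)) := by
      ext y
      simp [indicator, dist_eq_norm, norm_sub_rev]
    rw [e, integral_indicator Metric.isClosed_closedBall.measurableSet]
    simp only [integral_const, smul_eq_mul, mul_one, measureReal_def]
    rw [Measure.restrict_apply_univ]
    apply ENNReal.toReal_mono Metric.isBounded_closedBall.measure_lt_top.ne
    rw [← Measure.addHaar_closedBall_center volume x]
    exact Measure.restrict_apply_le _ _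
  calc _ ≤ ∫ x : EE d, (volume (Metric.closedBall (0 : EE d) r)).toReal ∂(mu d) := by
        apply integral_mono_of_nonneg
        · exact ae_of_all _ fun x => integral_nonneg fun y => indicator_nonneg (by simp) _
        · exact integrable_const _
        · exact ae_of_all _ h
    _ = _ := by simp

namespace Good

lemma xi_int (hK : GK K R) (hX : Good P K X) (γ : ℝ) {s t : ℝ} (hs : 0 ≤ s) (hst : s ≤ t)
    (ht : t ≤ s + 1) (x y : EE d) :
    Integrable (fun ω => (G γ X s t x ω - 1) * (G γ X s t y ω - 1)) P ∧
    ∫ ω, |(G γ X s t x ω - 1) * (G γ X s t y ω - 1)| ∂P ≤ exp (γ ^ 2) + 3 ∧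
    ∫ ω, (G γ X s t x ω - 1) * (G γ X s t y ω - 1) ∂P ≤
      exp (γ ^ 2) * indicator {p : EE d × EE d | ‖p.1 - p.2‖ ≤ R * exp (-s)} (fun _ => 1) (x, y) := by
  obtain ⟨i1, e1⟩ := hX.G_int hK γ hs hst x
  obtain ⟨i2, e2⟩ := hX.G_int hK γ hs hst y
  obtain ⟨i3, e3⟩ := hX.GG_int hK γ hs hst x y
  have ex : ∀ ω, (G γ X s t x ω - 1) * (G γ X s t y ω - 1) =
    G γ X s t x ω * G γ X s t y ω - G γ X s t x ω - G γ X s t y ω + 1 := fun ω => by ring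
  have hKK : K t (x - y) - K s (x - y) ≤ 1 :=
    (le_abs_self _).trans ((hK.le s t _ hs hst).trans (by linarith))
  have hle : exp (γ ^ 2 * (K t (x - y) - K s (x - y))) ≤ exp (γ ^ 2) := by
    apply exp_le_exp.2
    nlinarith [sq_nonneg γ]
  have i4 : Integrable (fun ω => G γ X s t x ω * G γ X s t y ω - G γ X s t x ω) P := i3.sub i1
  have i5 : Integrable (fun ω => G γ X s t x ω * G γ X s t y ω - G γ X s t x ω - G γ X s t y ω) P :=
    i4.sub i2
  have i : Integrable (fun ω => (G γ X s t x ω - 1) * (G γ X s t y ω - 1)) P := by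
    simp_rw [ex]
    exact i5.add (integrable_const _)
  refine ⟨i, ?_, ?_⟩
  · have j4 : Integrable (fun ω => G γ X s t x ω * G γ X s t y ω + G γ X s t x ω) P := i3.add i1
    have j5 : Integrable (fun ω => G γ X s t x ω * G γ X s t y ω + G γ X s t x ω
      + G γ X s t y ω) P := j4.add i2
    calc _ ≤ ∫ ω, (G γ X s t x ω * G γ X s t y ω + G γ X s t x ω + G γ X s t y ω + 1) ∂P := by
          refine integral_mono i.abs (j5.add (integrable_const _)) fun ω => ?_
          have h1 := G_pos (X := X) γ s t x ω
          have h2 := G_pos (X := X) γ s t y ω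
          have h3 := mul_pos h1 h2
          simp only [ex]
          rw [abs_le]
          constructor <;> nlinarith
      _ ≤ _ := by
          rw [integral_add j5 (integrable_const _), integral_add j4 i2, integral_add i3 i1, e1, e2, e3]
          simp
          linarith
  · simp_rw [ex]
    rw [integral_add i5 (integrable_const _), integral_sub i4 i2, integral_sub i3 i1, e1, e2, e3]
    by_cases h : ‖x - y‖ ≤ R * exp (-s)
    · have : (x, y) ∈ {p : EE d × EE d | ‖p.1 - p.2‖ ≤ R * exp (-s)} := h
      rw [indicator_of_mem this]
      simp
      linarith
    · have h' : (x, y) ∉ {p : EE d × EE d | ‖p.1 - p.2‖ ≤ R * exp (-s)} := h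
      rw [indicator_of_notMem h']
      have : R < exp s * ‖x - y‖ := by
        rw [not_le, exp_neg, ← div_eq_mul_inv, div_lt_iff₀ (exp_pos _)] at h
        linarith
      rw [hK.far s t _ hs hst this]
      simp

lemma second_mom (hK : GK K R) (hX : Good P K X) (γ : ℝ) {s t : ℝ} (hs : 0 ≤ s) (hst : s ≤ t)
    (ht : t ≤ s + 1) {u : ℝ → ℝ} (hu : Measurable u) (u0 : ∀ r, 0 ≤ u r) {A : ℝ} (hA : 0 ≤ A)
    (uA : ∀ r, u r ≤ A)
    (u1 : ∀ x, ∫ ω, u (X s x ω) ∂P ≤ 1) :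
    Integrable (fun ω => (∫ x, u (X s x ω) * (G γ X s t x ω - 1) ∂(mu d)) ^ 2) P ∧
    ∫ ω, (∫ x, u (X s x ω) * (G γ X s t x ω - 1) ∂(mu d)) ^ 2 ∂P ≤
      A * exp (γ ^ 2) * (volume (Metric.closedBall (0 : EE d) (R * exp (-s)))).toReal := by
  set f : EE d → Ω → ℝ := fun x ω => u (X s x ω) * (G γ X s t x ω - 1) with hf
  have mf : Measurable (Function.uncurry f) :=
    (hu.comp (hX.jm s)).mul ((hX.jmG γ s t).sub measurable_const)
  set g : EE d × EE d → Ω → ℝ := fun p ω => f p.1 ω * f p.2 ω with hg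
  have mg : Measurable (Function.uncurry g) := by
    have h1 : Measurable (fun q : (EE d × EE d) × Ω => Function.uncurry f (q.1.1, q.2)) :=
      mf.comp (by fun_prop)
    have h2 : Measurable (fun q : (EE d × EE d) × Ω => Function.uncurry f (q.1.2, q.2)) :=
      mf.comp (by fun_prop)
    exact h1.mul h2
  have ug : ∀ p ω, g p ω = (u (X s p.1 ω) * u (X s p.2 ω)) *
      ((G γ X s t p.1 ω - 1) * (G γ X s t p.2 ω - 1)) := by
    intro p ω; simp only [hg, hf]; ring
  have mfx : ∀ p, Measurable (g p) := fun p => mg.comp (by fun_prop : Measurable fun ω => (p, ω))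
  have muu : ∀ x, Measurable fun ω => u (X s x ω) := fun x => hu.comp (hX.meas s x)
  have uu0 : ∀ x y ω, 0 ≤ u (X s x ω) * u (X s y ω) := fun x y ω => mul_nonneg (u0 _) (u0 _)
  have uuA : ∀ x y ω, u (X s x ω) * u (X s y ω) ≤ A * A := fun x y ω =>
    mul_le_mul (uA _) (uA _) (u0 _) hA
  have bg : ∀ p ω, |g p ω| ≤ A * A * |(G γ X s t p.1 ω - 1) * (G γ X s t p.2 ω - 1)| := by
    intro p ω
    rw [ug, abs_mul, abs_of_nonneg (uu0 _ _ _)]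
    exact mul_le_mul_of_nonneg_right (uuA _ _ _) (abs_nonneg _)
  have ig : ∀ p, Integrable (g p) P := fun p =>
    ((hX.xi_int hK γ hs hst ht p.1 p.2).1.abs.const_mul (A * A)).mono' (mfx p).aestronglyMeasurable
      (ae_of_all _ fun ω => bg p ω)
  have cg : ∀ p, ∫ ω, |g p ω| ∂P ≤ A * A * (exp (γ ^ 2) + 3) := by
    intro p
    have h := hX.xi_int hK γ hs hst ht p.1 p.2
    calc _ ≤ ∫ ω, A * A * |(G γ X s t p.1 ω - 1) * (G γ X s t p.2 ω - 1)| ∂P :=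
          integral_mono (ig p).abs (h.1.abs.const_mul _) (bg p)
      _ ≤ _ := by
          rw [integral_const_mul]
          exact mul_le_mul_of_nonneg_left h.2.1 (mul_nonneg hA hA)
  obtain ⟨f1, f2, f3, f4, f5⟩ := fub (P := P) (m := (mu d).prod (mu d)) mg ig cg
  have sq : ∀ ω, ∫ p, g p ω ∂((mu d).prod (mu d)) = (∫ x, f x ω ∂(mu d)) ^ 2 := by
    intro ω
    rw [pow_two, ← integral_prod_mul]
  simp_rw [sq] at f2 f4
  refine ⟨f2, ?_⟩
  rw [f4]
  have bd : ∀ p, ∫ ω, g p ω ∂P ≤ A * exp (γ ^ 2) *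
      indicator {p : EE d × EE d | ‖p.1 - p.2‖ ≤ R * exp (-s)} (fun _ => 1) p := by
    rintro ⟨x, y⟩
    have h := hX.xi_int hK γ hs hst ht x y
    have hind := hX.ind1 hs hst (u := fun f => u (f x) * u (f y))
      (v := fun f => (exp (γ * f x - γ ^ 2 / 2 * (t - s)) - 1) *
        (exp (γ * f y - γ ^ 2 / 2 * (t - s)) - 1))
      ((hu.comp (measurable_pi_apply x)).mul (hu.comp (measurable_pi_apply y)))
      (by fun_prop)
    have hE := hind.integral_fun_mul_eq_mul_integral
      ((muu x).mul (muu y)).aestronglyMeasurable h.1.aestronglyMeasurable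
    have e : ∫ ω, g (x, y) ω ∂P = (∫ ω, u (X s x ω) * u (X s y ω) ∂P) *
        ∫ ω, (G γ X s t x ω - 1) * (G γ X s t y ω - 1) ∂P := by
      rw [show g (x, y) = _ from funext (ug (x, y))]
      exact hE
    rw [e]
    have iu : ∀ x, Integrable (fun ω => u (X s x ω)) P := fun x =>
      Integrable.of_bound (C := A) (muu x).aestronglyMeasurable (ae_of_all _ fun ω => by
        rw [norm_of_nonneg (u0 _)]; exact uA _)
    have h1 : ∫ ω, u (X s x ω) * u (X s y ω) ∂P ≤ A := by
      calc _ ≤ ∫ ω, A * u (X s y ω) ∂P := by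
            apply integral_mono_of_nonneg (ae_of_all _ fun ω => uu0 _ _ _) ((iu y).const_mul _)
            exact ae_of_all _ fun ω => mul_le_mul_of_nonneg_right (uA _) (u0 _)
        _ ≤ A := by
            rw [integral_const_mul]; exact mul_le_of_le_one_right hA (u1 y)
    have h0 : 0 ≤ ∫ ω, u (X s x ω) * u (X s y ω) ∂P := integral_nonneg fun ω => uu0 _ _ _
    have h2 : 0 ≤ exp (γ ^ 2) *
      indicator {p : EE d × EE d | ‖p.1 - p.2‖ ≤ R * exp (-s)} (fun _ => (1:ℝ)) (x, y) :=
      mul_nonneg (exp_pos _).le (indicator_nonneg (by simp) _)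
    rw [mul_assoc]
    exact (mul_le_mul_of_nonneg_left h.2.2 h0).trans (mul_le_mul_of_nonneg_right h1 h2)
  have hm : MeasurableSet {p : EE d × EE d | ‖p.1 - p.2‖ ≤ R * exp (-s)} :=
    measurableSet_le (by fun_prop) (by fun_prop)
  calc _ ≤ ∫ p, A * exp (γ ^ 2) *
      indicator {p : EE d × EE d | ‖p.1 - p.2‖ ≤ R * exp (-s)} (fun _ => 1) p
        ∂((mu d).prod (mu d)) :=
        integral_mono f1.integral_prod_left (((integrable_const _).indicator hm).const_mul _) bd
    _ ≤ _ := by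
        rw [integral_const_mul]
        exact mul_le_mul_of_nonneg_left (near_int _) (mul_nonneg hA (exp_pos _).le)

end Good
end field
end GMC

namespace GMC

open Real Set Topology
open scoped ENNReal NNReal

set_option linter.unusedSectionVars false

section field
variable {d : ℕ} {Ω : Type*} [m0 : MeasurableSpace Ω] {P : Measure Ω} [IsProbabilityMeasure P]
  {K : ℝ → EE d → ℝ} {X : ℝ → EE d → Ω → ℝ} {R : ℝ}

namespace Good

lemma G_cont (hX : Good P K X) (γ s t : ℝ) (ω : Ω) : Continuous fun x => G γ X s t x ω := by
  have := hX.cont_x t ω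
  have := hX.cont_x s ω
  unfold G; fun_prop

lemma first_mom (hK : GK K R) (hX : Good P K X) (γ : ℝ) {s t : ℝ} (hs : 0 ≤ s) (hst : s ≤ t)
    {u : ℝ → ℝ} (hu : Measurable u) (u0 : ∀ r, 0 ≤ u r) {B : ℝ}
    (iu : ∀ x, Integrable (fun ω => u (X s x ω)) P)
    (u1 : ∀ x, ∫ ω, u (X s x ω) ∂P ≤ B) :
    Integrable (fun ω => ∫ x, u (X s x ω) * (G γ X s t x ω - 1) ∂(mu d)) P ∧
    ∫ ω, |∫ x, u (X s x ω) * (G γ X s t x ω - 1) ∂(mu d)| ∂P ≤ 2 * B := by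
  set f : EE d → Ω → ℝ := fun x ω => u (X s x ω) * (G γ X s t x ω - 1) with hf
  have mf : Measurable (Function.uncurry f) :=
    (hu.comp (hX.jm s)).mul ((hX.jmG γ s t).sub measurable_const)
  have hB : 0 ≤ B := (integral_nonneg fun _ => u0 _).trans (u1 0)
  have key : ∀ x, Integrable (f x) P ∧ ∫ ω, |f x ω| ∂P ≤ 2 * B := by
    intro x
    obtain ⟨i1, e1⟩ := hX.G_int hK γ hs hst x
    have ix : Integrable (fun ω => G γ X s t x ω - 1) P := i1.sub (integrable_const _)
    have hind := hX.ind1 hs hst (u := fun f => u (f x))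
      (v := fun f => (exp (γ * f x - γ ^ 2 / 2 * (t - s)) - 1))
      (hu.comp (measurable_pi_apply x)) (by fun_prop)
    have hind' := hX.ind1 hs hst (u := fun f => u (f x))
      (v := fun f => |exp (γ * f x - γ ^ 2 / 2 * (t - s)) - 1|)
      (hu.comp (measurable_pi_apply x))
      (continuous_abs.measurable.comp (by fun_prop))
    refine ⟨hind.integrable_mul (iu x) ix, ?_⟩
    have e := hind'.integral_fun_mul_eq_mul_integral (iu x).aestronglyMeasurable
      ix.abs.aestronglyMeasurable
    have e2 : ∫ ω, |f x ω| ∂P = (∫ ω, u (X s x ω) ∂P) * ∫ ω, |G γ X s t x ω - 1| ∂P := by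
      refine Eq.trans ?_ e
      congr 1
      ext ω
      simp only [hf, abs_mul, abs_of_nonneg (u0 _)]
      rfl
    rw [e2, mul_comm]
    have h2 : ∫ ω, |G γ X s t x ω - 1| ∂P ≤ 2 := by
      calc _ ≤ ∫ ω, (G γ X s t x ω + 1) ∂P := by
            refine integral_mono ix.abs (i1.add (integrable_const _)) fun ω => ?_
            have := G_pos (X := X) γ s t x ω
            simp only
            rw [abs_le]; constructor <;> linarith
        _ = 2 := by
            rw [integral_add i1 (integrable_const _), e1]; simp; norm_num
    exact mul_le_mul h2 (u1 x) (integral_nonneg fun _ => u0 _) (by norm_num)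
  obtain ⟨f1, f2, f3, f4, f5⟩ := fub (P := P) (m := mu d) mf (fun x => (key x).1)
    (fun x => (key x).2)
  refine ⟨f2, f3.trans ?_⟩
  calc _ ≤ ∫ x, 2 * B ∂(mu d) := integral_mono f5 (integrable_const _) fun x => (key x).2
    _ = _ := by simp

lemma vol_scale (hK : GK K R) (s : ℝ) : (volume (Metric.closedBall (0 : EE d) (R * exp (-s)))).toReal =
    exp (- (d * s)) * (volume (Metric.closedBall (0 : EE d) R)).toReal := by
  rw [mul_comm R, Measure.addHaar_closedBall_mul volume _ (exp_pos _).le hK.R0.le,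
    ENNReal.toReal_mul,
    ENNReal.toReal_ofReal (by positivity), ← exp_nat_mul]
  simp

lemma step (hK : GK K R) (hX : Good P K X) (γ : ℝ) (hγ : γ ^ 2 < 2 * d) :
    ∃ C c : ℝ, 0 ≤ C ∧ 0 < c ∧ ∀ s t, 0 ≤ s → s ≤ t → t ≤ s + 1 →
      ∫ ω, |M γ X t ω - M γ X s ω| ∂P ≤ C * exp (- (c * s)) := by
  set κ : ℝ := (d - γ ^ 2 / 2) / 2 with hκ
  have κ0 : 0 < κ := by rw [hκ]; linarith
  set δ : ℝ := κ / (γ ^ 2 + 1) with hδ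
  have δ0 : 0 < δ := by positivity
  have hδγ : δ * γ ^ 2 ≤ κ := by
    rw [hδ, div_mul_eq_mul_div, div_le_iff₀ (by positivity)]
    nlinarith
  set V : ℝ := (volume (Metric.closedBall (0 : EE d) R)).toReal with hV
  have V0 : 0 ≤ V := ENNReal.toReal_nonneg
  refine ⟨exp (γ ^ 2) * V + 1 + 2, min (κ / 2) (δ * κ / 2), by positivity, by positivity, ?_⟩
  intro s t hs hst ht
  set c := min (κ / 2) (δ * κ / 2) with hc
  set A : ℝ := exp ((d - κ) * s) with hA
  set H : ℝ → ℝ := fun r => exp (γ * r - γ ^ 2 / 2 * s) with hH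
  have mH : Measurable H := by fun_prop
  set u1 : ℝ → ℝ := fun r => if H r ≤ A then H r else 0 with hu1
  set u2 : ℝ → ℝ := fun r => if H r ≤ A then 0 else H r with hu2
  have ms : MeasurableSet {r | H r ≤ A} := measurableSet_le mH measurable_const
  have m1 : Measurable u1 := Measurable.ite ms mH measurable_const
  have m2 : Measurable u2 := Measurable.ite ms measurable_const mH
  have H0 : ∀ r, 0 < H r := fun r => exp_pos _
  have A0 : 0 < A := exp_pos _
  have u10 : ∀ r, 0 ≤ u1 r := fun r => by simp only [hu1]; split_ifs <;> simp [(H0 r).le]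
  have u20 : ∀ r, 0 ≤ u2 r := fun r => by simp only [hu2]; split_ifs <;> simp [(H0 r).le]
  have u12 : ∀ r, u1 r + u2 r = H r := fun r => by simp only [hu1, hu2]; split_ifs <;> simp
  have u1A : ∀ r, u1 r ≤ A := fun r => by
    simp only [hu1]; split_ifs with h
    · exact h
    · exact A0.le
  have u2p : ∀ r, u2 r ≤ exp (- (δ * ((d - κ) * s))) * H r ^ (1 + δ) := fun r => by
    simp only [hu2]; split_ifs with h
    · positivity
    · have h1 : A ≤ H r := (not_le.1 h).le
      have h2 : A ^ δ ≤ H r ^ δ := rpow_le_rpow A0.le h1 δ0.le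
      have h3 : exp (- (δ * ((d - κ) * s))) * A ^ δ = 1 := by
        rw [hA, ← exp_mul, ← exp_add, ← exp_zero]; congr 1; ring
      rw [rpow_add (H0 r), rpow_one]
      calc H r = (exp (- (δ * ((d - κ) * s))) * A ^ δ) * H r := by rw [h3, one_mul]
        _ ≤ (exp (- (δ * ((d - κ) * s))) * H r ^ δ) * H r := by
          gcongr
        _ = _ := by ring
  have HD : ∀ x ω, H (X s x ω) = D γ X s x ω := fun x ω => rfl
  have Hi : ∀ x, Integrable (fun ω => H (X s x ω)) P := fun x => (hX.D_int hK γ hs x).1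
  have i1 : ∀ x, Integrable (fun ω => u1 (X s x ω)) P := fun x =>
    (Hi x).mono' (m1.comp (hX.meas s x)).aestronglyMeasurable (ae_of_all _ fun ω => by
      rw [norm_of_nonneg (u10 _)]; linarith [u12 (X s x ω), u20 (X s x ω)])
  have i2 : ∀ x, Integrable (fun ω => u2 (X s x ω)) P := fun x =>
    (Hi x).mono' (m2.comp (hX.meas s x)).aestronglyMeasurable (ae_of_all _ fun ω => by
      rw [norm_of_nonneg (u20 _)]; linarith [u12 (X s x ω), u10 (X s x ω)])
  have b1 : ∀ x, ∫ ω, u1 (X s x ω) ∂P ≤ 1 := fun x => by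
    rw [← (hX.D_int hK γ hs x).2]
    refine integral_mono (i1 x) (Hi x) fun ω => ?_
    have h1 := u12 (X s x ω)
    have h2 := u20 (X s x ω)
    show u1 (X s x ω) ≤ H (X s x ω)
    linarith
  have b2 : ∀ x, ∫ ω, u2 (X s x ω) ∂P ≤ exp (- (c * s)) := fun x => by
    obtain ⟨i, e⟩ := hX.D_mom hK γ hs x (1 + δ)
    calc _ ≤ ∫ ω, exp (- (δ * ((d - κ) * s))) * D γ X s x ω ^ (1 + δ) ∂P :=
          integral_mono (i2 x) (i.const_mul _) fun ω => u2p _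
      _ = exp (- (δ * ((d - κ) * s)) + (1 + δ) * (1 + δ - 1) * γ ^ 2 / 2 * s) := by
          rw [integral_const_mul, e, ← exp_add]
      _ ≤ _ := by
          apply exp_le_exp.2
          have h1 : c ≤ δ * κ / 2 := min_le_right _ _
          have h2 : (d:ℝ) - κ = γ ^ 2 / 2 + κ := by rw [hκ]; ring
          rw [h2]
          have h3 : δ * (δ * γ ^ 2) ≤ δ * κ := mul_le_mul_of_nonneg_left hδγ δ0.le
          nlinarith [mul_le_mul_of_nonneg_right h1 hs, mul_le_mul_of_nonneg_right h3 hs]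
  obtain ⟨j1, k1⟩ := hX.second_mom hK γ hs hst ht m1 u10 A0.le u1A b1
  obtain ⟨j1', -⟩ := hX.first_mom hK γ hs hst m1 u10 i1 b1
  obtain ⟨j2, k2⟩ := hX.first_mom hK γ hs hst m2 u20 i2 b2
  set Y1 : Ω → ℝ := fun ω => ∫ x, u1 (X s x ω) * (G γ X s t x ω - 1) ∂(mu d) with hY1
  set Y2 : Ω → ℝ := fun ω => ∫ x, u2 (X s x ω) * (G γ X s t x ω - 1) ∂(mu d) with hY2
  have dec : ∀ ω, M γ X t ω - M γ X s ω = Y1 ω + Y2 ω := by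
    intro ω
    have ci : Integrable (fun x => D γ X s x ω * |G γ X s t x ω - 1|) (mu d) :=
      cont_int ((hX.D_cont γ s ω).mul (((hX.G_cont γ s t ω).sub continuous_const).abs))
    have gi : ∀ u : ℝ → ℝ, Measurable u → (∀ r, 0 ≤ u r) → (∀ r, u r ≤ H r) →
        Integrable (fun x => u (X s x ω) * (G γ X s t x ω - 1)) (mu d) := by
      intro u mu' u0 uH
      refine ci.mono' ?_ (ae_of_all _ fun x => ?_)
      · exact ((mu'.comp (hX.cont_x s ω).measurable).mul
          ((hX.G_cont γ s t ω).measurable.sub measurable_const)).aestronglyMeasurable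
      · rw [norm_mul, norm_of_nonneg (u0 _), Real.norm_eq_abs]
        exact mul_le_mul_of_nonneg_right (uH _) (abs_nonneg _)
    simp only [hY1, hY2, M]
    rw [← integral_add (gi u1 m1 u10 fun r => by linarith [u12 r, u20 r])
      (gi u2 m2 u20 fun r => by linarith [u12 r, u10 r]), ← integral_sub
      (cont_int (hX.D_cont γ t ω)) (cont_int (hX.D_cont γ s ω))]
    congr 1
    ext x
    rw [← add_mul, u12, HD, D_mul γ s t]
    ring
  set q : ℝ := exp (κ / 2 * s) with hq
  have q0 : 0 < q := exp_pos _
  have young : ∀ ω, |Y1 ω| ≤ q * Y1 ω ^ 2 + q⁻¹ := by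
    intro ω
    have h1 : q * q⁻¹ = 1 := mul_inv_cancel₀ q0.ne'
    have h2 : 0 < q⁻¹ := inv_pos.2 q0
    rw [← sq_abs]
    have h3 := abs_nonneg (Y1 ω)
    have h4 : 0 ≤ q * (|Y1 ω| - q⁻¹) ^ 2 := by positivity
    have h5 : q * (|Y1 ω| - q⁻¹) ^ 2 = q * |Y1 ω| ^ 2 - 2 * (q * q⁻¹) * |Y1 ω| + (q * q⁻¹) * q⁻¹ := by ring
    rw [h5, h1] at h4
    linarith
  have E1 : ∫ ω, |Y1 ω| ∂P ≤ (exp (γ ^ 2) * V + 1) * exp (- (c * s)) := by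
    have hcs : exp (- (κ / 2 * s)) ≤ exp (- (c * s)) := by
      apply exp_le_exp.2
      nlinarith [mul_le_mul_of_nonneg_right (min_le_left (κ / 2) (δ * κ / 2)) hs]
    calc _ ≤ ∫ ω, (q * Y1 ω ^ 2 + q⁻¹) ∂P :=
          integral_mono j1'.abs ((j1.const_mul q).add (integrable_const _)) young
      _ = q * ∫ ω, Y1 ω ^ 2 ∂P + q⁻¹ := by
          rw [integral_add (j1.const_mul q) (integrable_const _), integral_const_mul]; simp; exact Or.inl rfl
      _ ≤ q * (A * exp (γ ^ 2) * (exp (- (d * s)) * V)) + q⁻¹ := by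
          rw [vol_scale hK] at k1
          gcongr
      _ = (exp (γ ^ 2) * V + 1) * exp (- (κ / 2 * s)) := by
          have : q * A * exp (- (d * s)) = exp (- (κ / 2 * s)) := by
            rw [hq, hA, ← exp_add, ← exp_add]; congr 1; ring
          have h2 : q⁻¹ = exp (- (κ / 2 * s)) := by rw [hq, exp_neg]
          rw [h2, ← this]; ring
      _ ≤ _ := by gcongr
  simp_rw [dec]
  calc _ ≤ ∫ ω, (|Y1 ω| + |Y2 ω|) ∂P :=
        integral_mono (j1'.add j2).abs (j1'.abs.add j2.abs) fun ω => abs_add_le _ _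
    _ = ∫ ω, |Y1 ω| ∂P + ∫ ω, |Y2 ω| ∂P := integral_add j1'.abs j2.abs
    _ ≤ _ := by linarith

lemma step_all (hK : GK K R) (hX : Good P K X) (γ : ℝ) (hγ : γ ^ 2 < 2 * d) :
    ∃ C c : ℝ, 0 ≤ C ∧ 0 < c ∧ ∀ s t, 0 ≤ s → s ≤ t →
      ∫ ω, |M γ X t ω - M γ X s ω| ∂P ≤ C * exp (- (c * s)) := by
  obtain ⟨C, c, hC, hc, h⟩ := hX.step hK γ hγ
  have hr : exp (-c) < 1 := by rw [exp_lt_one_iff]; linarith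
  have h1r : 0 < 1 - exp (-c) := by linarith
  refine ⟨C / (1 - exp (-c)), c, by positivity, hc, ?_⟩
  have key : ∀ n : ℕ, ∀ s t : ℝ, 0 ≤ s → s ≤ t → t ≤ s + n →
      ∫ ω, |M γ X t ω - M γ X s ω| ∂P ≤ C / (1 - exp (-c)) * exp (- (c * s)) := by
    intro n
    induction n with
    | zero =>
      intro s t hs hst ht
      have : t = s := by simp at ht; linarith
      subst this
      simp only [sub_self, abs_zero, integral_zero]
      positivity
    | succ n ih =>
      intro s t hs hst ht
      have e : C / (1 - exp (-c)) = C + C / (1 - exp (-c)) * exp (-c) := by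
        field_simp; ring
      by_cases h1 : t ≤ s + 1
      · refine (h s t hs hst h1).trans ?_
        apply mul_le_mul_of_nonneg_right _ (exp_pos _).le
        rw [e]
        have : 0 ≤ C / (1 - exp (-c)) * exp (-c) := by positivity
        linarith
      · push Not at h1
        have a := h s (s + 1) hs (by linarith) le_rfl
        have b := ih (s + 1) t (by linarith) h1.le (by push_cast at ht; linarith)
        have it := (hX.M_int hK γ (hs.trans hst)).1
        have is := (hX.M_int hK γ hs).1
        have i1 := (hX.M_int hK γ (by linarith : 0 ≤ s + 1)).1
        calc _ ≤ ∫ ω, (|M γ X t ω - M γ X (s + 1) ω| + |M γ X (s + 1) ω - M γ X s ω|) ∂P :=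
              integral_mono (it.sub is).abs ((it.sub i1).abs.add (i1.sub is).abs)
                fun ω => abs_sub_le _ _ _
          _ = ∫ ω, |M γ X t ω - M γ X (s + 1) ω| ∂P + ∫ ω, |M γ X (s + 1) ω - M γ X s ω| ∂P :=
              integral_add (it.sub i1).abs (i1.sub is).abs
          _ ≤ C / (1 - exp (-c)) * exp (- (c * (s + 1))) + C * exp (- (c * s)) := by linarith
          _ = (C + C / (1 - exp (-c)) * exp (-c)) * exp (- (c * s)) := by
              have : exp (- (c * (s + 1))) = exp (-c) * exp (- (c * s)) := by
                rw [← exp_add]; congr 1; ring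
              rw [this]; ring
          _ = _ := by rw [← e]
  intro s t hs hst
  obtain ⟨n, hn⟩ := exists_nat_ge (t - s)
  exact key n s t hs hst (by linarith)

end Good
end field
end GMC

namespace GMC

open Real Set Topology
open scoped ENNReal NNReal

set_option linter.unusedSectionVars false

lemma M_sm {d : ℕ} {Ω : Type*} {m : MeasurableSpace Ω} {X : ℝ → EE d → Ω → ℝ} {γ t : ℝ}
    (hc : ∀ ω, Continuous fun x => X t x ω) (hm : ∀ x, Measurable (X t x)) :
    StronglyMeasurable (M γ X t) := by
  have h1 : Measurable (Function.uncurry (X t)) :=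
    measurable_uncurry_of_continuous_of_measurable hc hm
  have h : Measurable (Function.uncurry (D γ X t)) := by
    have h : Function.uncurry (D γ X t) =
      fun p => exp (γ * Function.uncurry (X t) p - γ ^ 2 / 2 * t) := rfl
    rw [h]; fun_prop
  exact StronglyMeasurable.integral_prod_left (f := D γ X t) h.stronglyMeasurable

section field
variable {d : ℕ} {Ω : Type*} [m0 : MeasurableSpace Ω] {P : Measure Ω} [IsProbabilityMeasure P]
  {K : ℝ → EE d → ℝ} {X : ℝ → EE d → Ω → ℝ} {R : ℝ}

/-- the past of the field -/
def past (X : ℝ → EE d → Ω → ℝ) (s : ℝ) (ω : Ω) (p : Icc (0:ℝ) s × EE d) : ℝ := X p.1 p.2 ω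

/-- past sigma-algebra -/
def pastS (X : ℝ → EE d → Ω → ℝ) (s : ℝ) : MeasurableSpace Ω :=
  MeasurableSpace.comap (past X s) inferInstance

lemma pastS_mono (X : ℝ → EE d → Ω → ℝ) : Monotone (pastS X) := by
  intro s t hst
  rw [pastS, ← measurable_iff_comap_le]
  refine @measurable_pi_lambda _ _ _ (pastS X t) _ _ fun p => ?_
  have h1 : Measurable[pastS X t] (past X t) := comap_measurable _
  have h2 : Measurable (fun f : Icc (0:ℝ) t × EE d → ℝ => f (⟨p.1, p.1.2.1, p.1.2.2.trans hst⟩, p.2)) :=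
    measurable_pi_apply _
  exact h2.comp h1

namespace Good

lemma pastS_le (hX : Good P K X) (s : ℝ) : pastS X s ≤ m0 := by
  rw [pastS, ← measurable_iff_comap_le]
  exact measurable_pi_lambda _ fun p => hX.meas _ _

/-- discrete filtration -/
def filt (hX : Good P K X) (τ : ℕ → ℝ) (hτ : Monotone τ) : Filtration ℕ m0 where
  seq n := pastS X (τ n)
  mono' := fun _ _ h => pastS_mono X (hτ h)
  le' := fun n => hX.pastS_le (τ n)

lemma setInt (hK : GK K R) (hX : Good P K X) (γ : ℝ) {s t : ℝ} (hs : 0 ≤ s) (hst : s ≤ t)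
    {S : Set Ω} (hS : MeasurableSet[pastS X s] S) :
    ∫ ω in S, M γ X s ω ∂P = ∫ ω in S, M γ X t ω ∂P := by
  have mS : MeasurableSet S := hX.pastS_le s S hS
  obtain ⟨B, hB, rfl⟩ := hS
  have key : ∀ r, s ≤ r → ∫ ω in past X s ⁻¹' B, M γ X r ω ∂P =
      ∫ x, ∫ ω, indicator (past X s ⁻¹' B) (fun ω => D γ X r x ω) ω ∂P ∂(mu d) := by
    intro r hr
    rw [← integral_indicator mS]
    have h := fub (P := P) (m := mu d) (C := 1)
      (f := fun x ω => indicator (past X s ⁻¹' B) (fun ω => D γ X r x ω) ω) ?_ ?_ ?_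
    · rw [← h.2.2.2.1]
      congr 1
      ext ω
      by_cases hω : ω ∈ past X s ⁻¹' B
      · simp_rw [indicator_of_mem hω]; rfl
      · simp_rw [indicator_of_notMem hω]; simp
    · have : Function.uncurry (fun x ω => indicator (past X s ⁻¹' B) (fun ω => D γ X r x ω) ω) =
        indicator (Prod.snd ⁻¹' (past X s ⁻¹' B)) (Function.uncurry (D γ X r)) := by
        ext p; rfl
      rw [this]
      exact (hX.jmD γ r).indicator (measurable_snd mS)
    · exact fun x => (hX.D_int hK γ (hs.trans hr) x).1.indicator mS
    · intro x
      rw [← (hX.D_int hK γ (hs.trans hr) x).2]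
      refine integral_mono ((hX.D_int hK γ (hs.trans hr) x).1.indicator mS).abs
        (hX.D_int hK γ (hs.trans hr) x).1 fun ω => ?_
      have := D_pos (X := X) γ r x ω
      simp only [indicator]
      split_ifs
      · exact (abs_of_pos this).le
      · simp [this.le]
  rw [key s le_rfl, key t hst]
  congr 1
  ext x
  have hind := (hX.indep_past hst).comp
    (φ := fun f => indicator B (fun f : (Icc (0:ℝ) s × EE d → ℝ) =>
      exp (γ * f (⟨s, hs, le_rfl⟩, x) - γ ^ 2 / 2 * s)) f)
    (ψ := fun f : EE d → ℝ => exp (γ * f x - γ ^ 2 / 2 * (t - s)))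
    (Measurable.indicator (measurable_exp.comp
      (((measurable_pi_apply _).const_mul _).sub_const _)) hB)
    (by fun_prop)
  have i1 : Integrable (fun ω => indicator (past X s ⁻¹' B) (fun ω => D γ X s x ω) ω) P :=
    (hX.D_int hK γ hs x).1.indicator mS
  have i2 := hX.G_int hK γ hs hst x
  have e := hind.integral_fun_mul_eq_mul_integral (i1.aestronglyMeasurable)
    i2.1.aestronglyMeasurable
  have e2 : ∫ ω, indicator (past X s ⁻¹' B) (fun ω => D γ X t x ω) ω ∂P =
     (∫ ω, indicator (past X s ⁻¹' B) (fun ω => D γ X s x ω) ω ∂P) * ∫ ω, G γ X s t x ω ∂P := by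
    refine Eq.trans ?_ e
    congr 1
    ext ω
    rw [indicator_congr (fun ω _ => D_mul γ s t x ω)]
    by_cases hω : past X s ω ∈ B
    · have hω' : ω ∈ past X s ⁻¹' B := hω
      rw [indicator_of_mem hω']
      exact congrArg (· * G γ X s t x ω) (indicator_of_mem hω
        (fun f : (Icc (0:ℝ) s × EE d → ℝ) => exp (γ * f (⟨s, hs, le_rfl⟩, x) - γ ^ 2 / 2 * s))).symm
    · have hω' : ω ∉ past X s ⁻¹' B := hω
      rw [indicator_of_notMem hω']
      have h0 := congrArg (· * G γ X s t x ω) (indicator_of_notMem hω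
        (fun f : (Icc (0:ℝ) s × EE d → ℝ) => exp (γ * f (⟨s, hs, le_rfl⟩, x) - γ ^ 2 / 2 * s))).symm
      simp only [zero_mul] at h0
      exact h0
  rw [e2, i2.2, mul_one]

lemma mart (hK : GK K R) (hX : Good P K X) (γ : ℝ) (τ : ℕ → ℝ) (hτ : Monotone τ)
    (h0 : 0 ≤ τ 0) : Martingale (fun n => M γ X (τ n)) (hX.filt τ hτ) P := by
  have hn : ∀ n, 0 ≤ τ n := fun n => h0.trans (hτ (Nat.zero_le n))
  apply martingale_of_setIntegral_eq_succ
  · intro n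
    refine @M_sm _ _ (pastS X (τ n)) _ _ _ (fun ω => hX.cont_x _ ω) fun x => ?_
    have h1 : Measurable[pastS X (τ n)] (past X (τ n)) := comap_measurable _
    have h2 : Measurable (fun f : Icc (0:ℝ) (τ n) × EE d → ℝ => f (⟨τ n, hn n, le_rfl⟩, x)) :=
      measurable_pi_apply _
    exact h2.comp h1
  · exact fun n => (hX.M_int hK γ (hn n)).1
  · exact fun n S hS => hX.setInt hK γ (hn n) (hτ (Nat.le_succ n)) hS

lemma maxi (hK : GK K R) (hX : Good P K X) (γ : ℝ) (τ : ℕ → ℝ) (hτ : Monotone τ)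
    (h0 : 0 ≤ τ 0) {B ε : ℝ} (hε : 0 < ε) (N : ℕ)
    (hB : ∫ ω, |M γ X (τ N) ω - M γ X (τ 0) ω| ∂P ≤ B) :
    P {ω | ∃ j ≤ N, ε < |M γ X (τ j) ω - M γ X (τ 0) ω|} ≤ ENNReal.ofReal (B / ε) := by
  have hm := hX.mart hK γ τ hτ h0
  have hn : ∀ n, 0 ≤ τ n := fun n => h0.trans (hτ (Nat.zero_le n))
  have hi := fun n => (hX.M_int hK γ (hn n)).1
  have hc : Martingale (fun _ : ℕ => M γ X (τ 0)) (hX.filt τ hτ) P := by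
    refine martingale_of_setIntegral_eq_succ ?_ (fun _ => hi 0) (fun _ _ _ => rfl)
    intro n
    exact (hm.1 0).mono ((hX.filt τ hτ).mono (Nat.zero_le n))
  have hd := hm.sub hc
  set f : ℕ → Ω → ℝ := fun n ω => |M γ X (τ n) ω - M γ X (τ 0) ω| with hf
  have hs : Submartingale f (hX.filt τ hτ) P := hd.submartingale.sup hd.neg.submartingale
  have hpos : 0 ≤ f := fun n ω => abs_nonneg _
  have h := maximal_ineq hs hpos (ε := ε.toNNReal) N
  set S := {ω | (ε.toNNReal : ℝ) ≤ (Finset.range (N + 1)).sup' Finset.nonempty_range_add_one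
    fun k => f k ω} with hS
  have sub : {ω | ∃ j ≤ N, ε < |M γ X (τ j) ω - M γ X (τ 0) ω|} ⊆ S := by
    rintro ω ⟨j, hj, h⟩
    change (ε.toNNReal : ℝ) ≤ (Finset.range (N + 1)).sup' Finset.nonempty_range_add_one
      fun k => f k ω
    rw [Real.coe_toNNReal _ hε.le]
    refine h.le.trans ?_
    exact Finset.le_sup' (fun k => f k ω) (by simp; omega : j ∈ Finset.range (N + 1))
  have h2 : ∫ ω in S, f N ω ∂P ≤ B := by
    refine le_trans ?_ hB
    exact setIntegral_le_integral (((hi N).sub (hi 0)).abs) (ae_of_all _ fun ω => abs_nonneg _)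
  have h3 : ENNReal.ofReal ε * P S ≤ ENNReal.ofReal B :=
    h.trans (ENNReal.ofReal_le_ofReal h2)
  refine (measure_mono sub).trans ?_
  rw [ENNReal.ofReal_div_of_pos hε, ENNReal.le_div_iff_mul_le (by simp [hε]) (by simp), mul_comm]
  exact h3

lemma M_cont (hX : Good P K X) (γ : ℝ) (ω : Ω) : Continuous fun t => M γ X t ω := by
  have h := hX.cont ω
  have : Continuous (Function.uncurry fun t x => D γ X t x ω) := by
    unfold D Function.uncurry; fun_prop
  exact continuous_parametric_integral_of_continuous (μ := volume) this (cube_compact d)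

lemma maxi_cont (hK : GK K R) (hX : Good P K X) (γ : ℝ) {s B ε : ℝ} (hs : 0 ≤ s) (hε : 0 < ε)
    (hB : ∀ t, s ≤ t → ∫ ω, |M γ X t ω - M γ X s ω| ∂P ≤ B) :
    P {ω | ∃ t, s ≤ t ∧ ε < |M γ X t ω - M γ X s ω|} ≤ ENNReal.ofReal (B / ε) := by
  set E : ℕ → Set Ω := fun m => {ω | ∃ j : ℕ, j ≤ 4 ^ m ∧ ε < |M γ X (s + j / 2 ^ m) ω - M γ X s ω|} with hE
  have mono : Monotone E := by
    refine monotone_nat_of_le_succ fun m => ?_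
    rintro ω ⟨j, hj, h⟩
    refine ⟨2 * j, by rw [pow_succ]; omega, ?_⟩
    have : ((2 * j : ℕ) : ℝ) / 2 ^ (m + 1) = j / 2 ^ m := by
      push_cast; rw [pow_succ]; field_simp
    rw [this]; exact h
  have sub : {ω | ∃ t, s ≤ t ∧ ε < |M γ X t ω - M γ X s ω|} ⊆ ⋃ m, E m := by
    rintro ω ⟨t, hst, h⟩
    have hc : Continuous fun r => |M γ X r ω - M γ X s ω| := ((hX.M_cont γ ω).sub continuous_const).abs
    -- approximations of t from above
    set a : ℕ → ℝ := fun m => s + (⌈(t - s) * 2 ^ m⌉₊ : ℝ) / 2 ^ m with ha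
    have hlim : Tendsto a atTop (𝓝 t) := by
      have h1 : Tendsto (fun m : ℕ => t + (1 / 2 : ℝ) ^ m) atTop (𝓝 (t + 0)) :=
        tendsto_const_nhds.add (tendsto_pow_atTop_nhds_zero_of_lt_one (by norm_num) (by norm_num))
      rw [add_zero] at h1
      refine tendsto_of_tendsto_of_tendsto_of_le_of_le tendsto_const_nhds h1 (fun m => ?_) (fun m => ?_)
      · have h2 := Nat.le_ceil ((t - s) * 2 ^ m)
        have : t - s ≤ (⌈(t - s) * 2 ^ m⌉₊ : ℝ) / 2 ^ m := by
          rw [le_div_iff₀ (by positivity)]; exact h2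
        simp only [ha]; linarith
      · have h2 := (Nat.ceil_lt_add_one (a := (t - s) * 2 ^ m) (by
          have : 0 ≤ t - s := by linarith
          positivity)).le
        have : (⌈(t - s) * 2 ^ m⌉₊ : ℝ) / 2 ^ m ≤ t - s + (1 / 2) ^ m := by
          rw [div_le_iff₀ (by positivity), add_mul, ← mul_pow]; norm_num; exact h2
        simp only [ha]; linarith
    have ev1 : ∀ᶠ m in atTop, ε < |M γ X (a m) ω - M γ X s ω| :=
      ((hc.tendsto t).comp hlim).eventually (lt_mem_nhds h)
    have ev2 : ∀ᶠ m : ℕ in atTop, t - s ≤ (2:ℝ) ^ m :=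
      (tendsto_pow_atTop_atTop_of_one_lt (by norm_num : (1:ℝ) < 2)).eventually_ge_atTop _
    obtain ⟨m, hm1, hm2⟩ := (ev1.and ev2).exists
    refine mem_iUnion.2 ⟨m, ⌈(t - s) * 2 ^ m⌉₊, ?_, hm1⟩
    rw [Nat.ceil_le]
    push_cast
    calc (t - s) * 2 ^ m ≤ 2 ^ m * 2 ^ m := by gcongr
      _ = 4 ^ m := by rw [← mul_pow]; norm_num
  refine (measure_mono sub).trans ?_
  rw [mono.measure_iUnion]
  refine iSup_le fun m => ?_
  have hτ : Monotone fun j : ℕ => s + (j:ℝ) / 2 ^ m := by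
    intro i j hij
    have : (i:ℝ) ≤ j := by exact_mod_cast hij
    simp only
    gcongr
  have h := hX.maxi hK γ (fun j => s + (j:ℝ) / 2 ^ m) hτ (by simpa using hs) hε (4 ^ m) (B := B) ?_
  · simpa using h
  · simpa using hB _ (by simp only [le_add_iff_nonneg_right]; positivity)

lemma lim_exists (hK : GK K R) (hX : Good P K X) (γ : ℝ) (hγ : γ ^ 2 < 2 * d) :
    ∃ L : Ω → ℝ, Measurable L ∧ (∀ ω, 0 ≤ L ω) ∧
      (∀ᵐ ω ∂P, Tendsto (fun t : ℝ => M γ X t ω) atTop (𝓝 (L ω))) ∧ P {ω | L ω = 0} < 1 := by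
  obtain ⟨C, c, hC, hc, hst⟩ := hX.step_all hK γ hγ
  set B : ℕ → Set Ω := fun n => {ω | ∃ t, (n:ℝ) ≤ t ∧ exp (- (c / 2 * n)) < |M γ X t ω - M γ X n ω|}
  have hBn : ∀ n : ℕ, P (B n) ≤ ENNReal.ofReal (C * exp (- (c / 2)) ^ n) := by
    intro n
    refine (hX.maxi_cont hK γ (Nat.cast_nonneg n) (exp_pos _)
      (fun t ht => hst n t (Nat.cast_nonneg n) ht)).trans (le_of_eq ?_)
    congr 1
    rw [mul_div_assoc, ← exp_sub, ← exp_nat_mul]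
    congr 2; ring
  have hr : exp (- (c / 2)) < 1 := by rw [exp_lt_one_iff]; linarith
  have hsum : ∑' n, P (B n) ≠ ∞ := by
    have s1 : Summable fun n : ℕ => C * exp (- (c / 2)) ^ n :=
      (summable_geometric_of_lt_one (exp_pos _).le hr).mul_left C
    exact ne_top_of_le_ne_top s1.tsum_ofReal_ne_top (ENNReal.tsum_le_tsum hBn)
  have hex : ∀ᵐ ω ∂P, ∃ l, Tendsto (fun t : ℝ => M γ X t ω) atTop (𝓝 l) := by
    filter_upwards [ae_eventually_notMem hsum] with ω hω
    apply cauchySeq_tendsto_of_complete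
    rw [Metric.cauchySeq_iff']
    intro ε hε
    have ev : ∀ᶠ n : ℕ in atTop, exp (- (c / 2)) ^ n < ε :=
      (tendsto_pow_atTop_nhds_zero_of_lt_one (exp_pos _).le hr).eventually (gt_mem_nhds hε)
    obtain ⟨n, h1, h2⟩ := (hω.and ev).exists
    refine ⟨n, fun t ht => ?_⟩
    have h3 : ¬ exp (- (c / 2 * n)) < |M γ X t ω - M γ X n ω| := fun h => h1 ⟨t, ht, h⟩
    rw [Real.dist_eq]
    refine (not_lt.1 h3).trans_lt ?_
    rw [← exp_nat_mul] at h2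
    have e : - (c / 2 * n) = n * -(c / 2) := by ring
    rw [e]; exact h2
  obtain ⟨L, mL, hL⟩ := measurable_limit_of_tendsto_metrizable_ae
    (fun t => (hX.M_meas γ t).aemeasurable) hex
  have hL0 : ∀ᵐ ω ∂P, L ω = max (L ω) 0 := by
    filter_upwards [hL] with ω h
    rw [max_eq_left]
    exact ge_of_tendsto' h fun t => M_nonneg γ t ω
  refine ⟨fun ω => max (L ω) 0, mL.max measurable_const, fun ω => le_max_right _ _, ?_, ?_⟩
  · filter_upwards [hL, hL0] with ω h1 h2
    rw [← h2]; exact h1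
  · by_contra hcon
    have h1 : P {ω | max (L ω) 0 = 0} = 1 := le_antisymm prob_le_one (not_lt.1 hcon)
    have h2 : ∀ᵐ ω ∂P, max (L ω) 0 = 0 :=
      (prob_compl_eq_zero_iff (measurableSet_eq_fun (mL.max measurable_const) measurable_const)).2 h1
    have h3 : ∀ n : ℕ, (1:ℝ) ≤ C * exp (- c) ^ n := by
      intro n
      have fat := lintegral_liminf_le (μ := P) (u := (atTop : Filter ℕ))
        (f := fun (m : ℕ) ω => ENNReal.ofReal |M γ X (m:ℝ) ω - M γ X n ω|)
        (fun m => (((hX.M_meas γ m).sub (hX.M_meas γ n)).abs).ennreal_ofReal)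
      have e1 : ∫⁻ ω, liminf (fun m : ℕ => ENNReal.ofReal |M γ X (m:ℝ) ω - M γ X n ω|) atTop ∂P =
          1 := by
        have : ∫⁻ ω, liminf (fun m : ℕ => ENNReal.ofReal |M γ X (m:ℝ) ω - M γ X n ω|) atTop ∂P =
            ∫⁻ ω, ENNReal.ofReal (M γ X n ω) ∂P := by
          apply lintegral_congr_ae
          filter_upwards [hL, hL0, h2] with ω a1 a2 a3
          rw [a2, a3] at a1
          have a4 : Tendsto (fun m : ℕ => ENNReal.ofReal |M γ X (m:ℝ) ω - M γ X n ω|) atTop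
              (𝓝 (ENNReal.ofReal |0 - M γ X n ω|)) :=
            ENNReal.tendsto_ofReal (((a1.comp tendsto_natCast_atTop_atTop).sub_const _).abs)
          rw [a4.liminf_eq, zero_sub, abs_neg, abs_of_nonneg (M_nonneg _ _ _)]
        rw [this, ← ofReal_integral_eq_lintegral_ofReal (hX.M_int hK γ (Nat.cast_nonneg n)).1
          (ae_of_all _ fun ω => M_nonneg _ _ _), (hX.M_int hK γ (Nat.cast_nonneg n)).2]
        simp
      have e2 : liminf (fun m : ℕ => ∫⁻ ω, ENNReal.ofReal |M γ X (m:ℝ) ω - M γ X n ω| ∂P) atTop ≤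
          ENNReal.ofReal (C * exp (-c) ^ n) := by
        refine liminf_le_of_frequently_le' ?_
        refine Eventually.frequently ?_
        filter_upwards [eventually_ge_atTop n] with m hm
        have hi := ((hX.M_int hK γ (Nat.cast_nonneg m)).1.sub
          (hX.M_int hK γ (Nat.cast_nonneg n)).1).abs
        have := ofReal_integral_eq_lintegral_ofReal hi (ae_of_all _ fun ω => abs_nonneg _)
        refine (this.symm.le).trans ?_
        apply ENNReal.ofReal_le_ofReal
        refine (hst n m (Nat.cast_nonneg n) (by exact_mod_cast hm)).trans (le_of_eq ?_)
        rw [← exp_nat_mul]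
        congr 2; ring
      rw [e1] at fat
      have := fat.trans e2
      rwa [ENNReal.one_le_ofReal] at this
    have h4 : Tendsto (fun n : ℕ => C * exp (-c) ^ n) atTop (𝓝 (C * 0)) :=
      (tendsto_pow_atTop_nhds_zero_of_lt_one (exp_pos _).le (by
        rw [exp_lt_one_iff]; linarith)).const_mul C
    have := ge_of_tendsto' h4 h3
    simp at this
    linarith

end Good
end field
end GMC

namespace GMC

open Real Set Topology
open scoped ENNReal NNReal

set_option linter.unusedSectionVars false

lemma int_fun (S : Type*) [MetricSpace S] [CompactSpace S] [Nonempty S] [MeasurableSpace S]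
    [BorelSpace S] (m : Measure S) [IsFiniteMeasure m] :
    ∃ Φ : (S → ℝ) → ℝ, Measurable Φ ∧ ∀ f, Continuous f → Φ f = ∫ x, f x ∂m := by
  classical
  set pr : ℕ → SimpleFunc S S := fun n => SimpleFunc.nearestPt (TopologicalSpace.denseSeq S) n
  set F : ℕ → (S → ℝ) → ℝ := fun n f => ∑ y ∈ (pr n).range, m.real (pr n ⁻¹' {y}) * f y with hF
  have mF : ∀ n, Measurable (F n) := fun n =>
    Finset.measurable_fun_sum _ fun y _ => (measurable_pi_apply y).const_mul _
  have eF : ∀ n f, F n f = ∫ x, f (pr n x) ∂m := by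
    intro n f
    have e : ∀ x, f (pr n x) = ∑ y ∈ (pr n).range, indicator (pr n ⁻¹' {y}) (fun _ => f y) x := by
      intro x
      rw [Finset.sum_eq_single (pr n x)]
      · simp
      · intro y _ hy
        rw [indicator_of_notMem]
        simpa using hy.symm
      · intro h
        exact absurd (SimpleFunc.mem_range_self _ x) h
    simp_rw [e]
    rw [integral_finsetSum _ fun y _ =>
      (integrable_const _).indicator ((pr n).measurableSet_fiber y)]
    simp only [hF]
    refine Finset.sum_congr rfl fun y _ => ?_
    rw [integral_indicator_const _ ((pr n).measurableSet_fiber y), smul_eq_mul]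
  refine ⟨fun f => limsup (fun n => F n f) atTop, Measurable.limsup mF, fun f hf => ?_⟩
  apply Tendsto.limsup_eq
  simp_rw [eF]
  obtain ⟨C, hC⟩ := (isCompact_range hf).isBounded.exists_norm_le
  refine tendsto_integral_of_dominated_convergence (fun _ => C) ?_ (integrable_const _) ?_ ?_
  · intro n
    exact (hf.measurable.comp (pr n).measurable).aestronglyMeasurable
  · exact fun n => ae_of_all _ fun x => hC _ (mem_range_self _)
  · refine ae_of_all _ fun x => (hf.tendsto x).comp ?_
    apply SimpleFunc.tendsto_nearestPt
    rw [(TopologicalSpace.denseRange_denseSeq S).closure_range]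
    trivial

instance (d : ℕ) : CompactSpace (cube d) := isCompact_iff_compactSpace.1 (cube_compact d)
instance (d : ℕ) : Nonempty (cube d) := ⟨⟨0, fun i => by simp⟩⟩

lemma vol_fun (d : ℕ) (γ c : ℝ) : ∃ Ψ : (cube d → ℝ) → ℝ, Measurable Ψ ∧
    ∀ g : EE d → ℝ, Continuous g → Ψ (fun z => g z) = ∫ x, exp (γ * g x - c) ∂(mu d) := by
  set m : Measure (cube d) := (volume : Measure (EE d)).comap Subtype.val with hm
  have hfin : IsFiniteMeasure m := by
    constructor
    rw [hm, (MeasurableEmbedding.subtype_coe (cube_meas d)).comap_apply]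
    simp [cube_vol]
  obtain ⟨Φ, mΦ, hΦ⟩ := int_fun (cube d) m
  refine ⟨fun f => Φ (fun z => exp (γ * f z - c)), mΦ.comp (by fun_prop), fun g hg => ?_⟩
  show Φ (fun z => exp (γ * g z - c)) = _
  rw [hΦ _ (by fun_prop)]
  exact integral_subtype_comap (cube_meas d) (fun x => exp (γ * g x - c))

lemma sub_cube {d : ℕ} {g : EE d → ℝ} (hg : Continuous g) (g0 : ∀ x, 0 ≤ g x) {r : ℝ} (hr : 0 < r)
    (a : EE d) (ha : ∀ z ∈ cube d, a + r • z ∈ cube d) :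
    r ^ d * ∫ z, g (a + r • z) ∂(mu d) ≤ ∫ x, g x ∂(mu d) := by
  have hi : Integrable (indicator (cube d) g) volume :=
    (integrable_indicator_iff (cube_meas d)).2 (cont_int hg)
  have e : ∫ x, g x ∂(mu d) = r ^ d * ∫ z, indicator (cube d) g (a + r • z) := by
    have h1 := Measure.integral_comp_smul (volume : Measure (EE d))
      (fun y => indicator (cube d) g (a + y)) r
    rw [h1, integral_add_left_eq_self, integral_indicator (cube_meas d)]
    simp only [finrank_euclideanSpace, Fintype.card_fin, smul_eq_mul]
    rw [abs_of_pos (by positivity), ← mul_assoc, mul_inv_cancel₀ (by positivity), one_mul]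
    rfl
  rw [e]
  apply mul_le_mul_of_nonneg_left _ (by positivity)
  have hi2 : Integrable (fun z => indicator (cube d) g (a + r • z)) volume :=
    (hi.comp_add_left a).comp_smul hr.ne'
  rw [mu, ← integral_indicator (cube_meas d)]
  refine integral_mono ?_ hi2 fun z => ?_
  · exact (integrable_indicator_iff (cube_meas d)).2 (cont_int (by fun_prop))
  · by_cases hz : z ∈ cube d
    · rw [indicator_of_mem hz, indicator_of_mem (ha z hz)]
    · rw [indicator_of_notMem hz]
      exact indicator_nonneg (fun x _ => g0 x) _

/-- geometry of the small cubes -/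
lemma geom {d : ℕ} (hd : 1 ≤ d) {R : ℝ} (hR : 0 < R) {N : ℕ} (hN : 1 ≤ N) :
    ∃ (s : ℝ) (a : Fin N → EE d), 0 ≤ s ∧ (∀ i, ∀ z ∈ cube d, a i + exp (-s) • z ∈ cube d) ∧
      ∀ i j, i ≠ j → ∀ z ∈ cube d, ∀ w ∈ cube d,
        R < exp s * ‖(a i + exp (-s) • z) - (a j + exp (-s) • w)‖ := by
  set l : ℝ := N * (R + 1) + 1 with hl
  have hN' : (1:ℝ) ≤ N := by exact_mod_cast hN
  have N0 : (0:ℝ) < N := by linarith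
  have l1 : N + 1 ≤ l := by nlinarith
  have l0 : 0 < l := by linarith
  have es : exp (log l) = l := exp_log l0
  have es' : exp (-log l) = l⁻¹ := by rw [exp_neg, es]
  refine ⟨log l, fun i => EuclideanSpace.single ⟨0, hd⟩ ((i:ℝ) / N), log_nonneg (by linarith), ?_, ?_⟩
  · intro i z hz k
    rw [es']
    have hzk := hz k
    have hi : ((i:ℕ):ℝ) + 1 ≤ N := by exact_mod_cast i.2
    have i0 : (0:ℝ) ≤ (i:ℕ) := Nat.cast_nonneg _
    have linv : 0 < l⁻¹ := inv_pos.2 l0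
    have h1 : l⁻¹ * z k ≤ l⁻¹ := mul_le_of_le_one_right linv.le hzk.2
    have h0 : 0 ≤ l⁻¹ * z k := mul_nonneg linv.le hzk.1
    have h2 : l⁻¹ ≤ (N:ℝ)⁻¹ := inv_anti₀ N0 (by linarith)
    have h3 : ((i:ℕ):ℝ) / N + (N:ℝ)⁻¹ ≤ 1 := by
      rw [div_add' _ _ _ N0.ne', inv_mul_cancel₀ N0.ne', div_le_one N0]; exact hi
    have h4 : (N:ℝ)⁻¹ ≤ 1 := inv_le_one_of_one_le₀ hN'
    have h5 : (0:ℝ) ≤ (i:ℕ) / N := by positivity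
    simp only [PiLp.add_apply, PiLp.smul_apply, EuclideanSpace.single_apply, smul_eq_mul, mem_Icc]
    split_ifs
    · constructor <;> linarith
    · constructor <;> linarith
  · intro i j hij z hz w hw
    set v := (EuclideanSpace.single (⟨0, hd⟩ : Fin d) ((i:ℝ) / N) + exp (-log l) • z) -
      (EuclideanSpace.single (⟨0, hd⟩ : Fin d) ((j:ℝ) / N) + exp (-log l) • w) with hv
    have h1 : |v ⟨0, hd⟩| ≤ ‖v‖ := by
      have := PiLp.norm_apply_le v ⟨0, hd⟩
      rwa [Real.norm_eq_abs] at this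
    have h2 : v ⟨0, hd⟩ = (i - j : ℝ) / N + l⁻¹ * (z ⟨0, hd⟩ - w ⟨0, hd⟩) := by
      simp [hv, es']; ring
    have h3 : (1:ℝ) ≤ |(i:ℝ) - j| := by
      have : ((i:ℕ):ℤ) ≠ (j:ℕ) := by
        intro h; apply hij; ext; exact_mod_cast h
      have h' : (1:ℤ) ≤ |((i:ℕ):ℤ) - (j:ℕ)| := Int.one_le_abs (sub_ne_zero.2 this)
      exact_mod_cast h'
    have h4 : |z ⟨0, hd⟩ - w ⟨0, hd⟩| ≤ 1 := by
      have a1 := hz ⟨0, hd⟩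
      have a2 := hw ⟨0, hd⟩
      rw [abs_le]; constructor <;> linarith [a1.1, a1.2, a2.1, a2.2]
    rw [es]
    have h5 : |l * v ⟨0, hd⟩| ≤ l * ‖v‖ := by
      rw [abs_mul, abs_of_pos l0]; exact mul_le_mul_of_nonneg_left h1 l0.le
    refine lt_of_lt_of_le ?_ h5
    have h6 : l * v ⟨0, hd⟩ = l / N * (i - j : ℝ) + (z ⟨0, hd⟩ - w ⟨0, hd⟩) := by
      rw [h2]; field_simp
    have h7 : R + 1 < l / N := by
      rw [lt_div_iff₀ N0]; rw [hl]; linarith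
    have h8 : |l / N * (i - j : ℝ)| ≤ |l * v ⟨0, hd⟩| + |z ⟨0, hd⟩ - w ⟨0, hd⟩| := by
      have : l / N * (i - j : ℝ) = l * v ⟨0, hd⟩ - (z ⟨0, hd⟩ - w ⟨0, hd⟩) := by rw [h6]; ring
      rw [this]; exact abs_sub _ _
    rw [abs_mul, abs_of_pos (by positivity)] at h8
    have h9 : l / N ≤ l / N * |(i:ℝ) - j| := le_mul_of_one_le_right (by positivity) h3
    linarith

end GMC

namespace GMC

open Real Set Topology
open scoped ENNReal NNReal

set_option linter.unusedSectionVars false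

section zeroone
variable {d : ℕ} {Ω : Type*} [m0 : MeasurableSpace Ω] {P : Measure Ω} [IsProbabilityMeasure P]
  {K : ℝ → EE d → ℝ} {X : ℝ → EE d → Ω → ℝ} {R : ℝ}

namespace Good

lemma bdd_set (hX : Good P K X) (s : ℝ) {δ : ℝ≥0∞} (hδ : 0 < δ) :
    ∃ m : ℝ, 0 ≤ m ∧ ∃ A : Set Ω, MeasurableSet A ∧ P Aᶜ ≤ δ ∧
      ∀ ω ∈ A, ∀ x ∈ cube d, |X s x ω| ≤ m := by
  set q : ℕ → cube d := TopologicalSpace.denseSeq (cube d) with hq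
  set A : ℕ → Set Ω := fun m => {ω | ∀ n, |X s (q n) ω| ≤ m} with hA
  have mA : ∀ m, MeasurableSet (A m) := by
    intro m
    have : A m = ⋂ n, {ω | |X s (q n) ω| ≤ m} := by ext ω; simp [hA]
    rw [this]
    exact MeasurableSet.iInter fun n => measurableSet_le (hX.meas s _).abs measurable_const
  have anti : Antitone fun m => (A m)ᶜ := by
    intro m n hmn
    apply compl_subset_compl.2
    intro ω hω k
    exact (hω k).trans (by exact_mod_cast hmn)
  have em : ⋂ m, (A m)ᶜ = ∅ := by
    rw [← compl_iUnion, compl_empty_iff, eq_univ_iff_forall]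
    intro ω
    obtain ⟨C, hC⟩ := ((cube_compact d).image (hX.cont_x s ω)).isBounded.exists_norm_le
    obtain ⟨m, hm⟩ := exists_nat_ge C
    refine mem_iUnion.2 ⟨m, fun n => ?_⟩
    exact (hC _ (mem_image_of_mem _ (q n).2)).trans hm
  have ht := tendsto_measure_iInter_atTop (μ := P) (fun m => (mA m).compl.nullMeasurableSet) anti
    ⟨0, measure_ne_top _ _⟩
  rw [em, measure_empty] at ht
  obtain ⟨m, hm⟩ := (ht.eventually (eventually_le_nhds hδ)).exists
  refine ⟨m, Nat.cast_nonneg _, A m, mA m, hm, fun ω hω x hx => ?_⟩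
  have hc : Continuous fun z : cube d => |X s z ω| := by
    have := hX.cont_x s ω
    fun_prop
  have hcl : IsClosed {z : cube d | |X s z ω| ≤ m} := isClosed_le hc continuous_const
  have h1 : closure (range q) ⊆ {z : cube d | |X s z ω| ≤ m} := by
    apply closure_minimal _ hcl
    rintro _ ⟨n, rfl⟩
    exact hω n
  rw [(TopologicalSpace.denseRange_denseSeq (cube d)).closure_range] at h1
  exact h1 (mem_univ (⟨x, hx⟩ : cube d))

lemma zo_t (hd : 1 ≤ d) (hK : GK K R) (hX : Good P K X) {N : ℕ} (hN : 1 ≤ N) {δ : ℝ≥0∞}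
    (hδ : 0 < δ) : ∃ s B : ℝ, 0 ≤ s ∧ 0 < B ∧ ∀ γ : ℝ, 0 ≤ γ → γ ^ 2 ≤ 2 * d → ∀ t, s ≤ t → ∀ b,
      P {ω | M γ X t ω < b} ≤ δ + P {ω | M γ X (t - s) ω < B * b} ^ N := by
  obtain ⟨s, a, hs, ha1, ha2⟩ := geom (d := d) hd hK.R0 hN
  obtain ⟨m, hm, A, mA, PA, hA⟩ := hX.bdd_set s hδ
  set η : ℝ := exp (-(√(2 * d) * m) - d * s) with hη
  have η0 : 0 < η := exp_pos _
  set r : ℝ := exp (-s) with hr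
  have r0 : 0 < r := exp_pos _
  refine ⟨s, (η * r ^ d)⁻¹, hs, by positivity, fun γ hγ0 hγ t hst b => ?_⟩
  obtain ⟨Ψ, mΨ, hΨ⟩ := vol_fun d γ (γ ^ 2 / 2 * (t - s))
  set ψ : Fin N → cube d → EE d := fun i z => a i + r • (z : EE d) with hψ
  have ind := hX.indep_far hK hs hst ψ (fun i j hij z w => ha2 i j hij z z.2 w w.2)
  set I : Fin N → Ω → (cube d → ℝ) := fun i ω z => X t (ψ i z) ω - X s (ψ i z) ω with hI
  have mI : ∀ i, Measurable (I i) := fun i =>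
    measurable_pi_lambda _ fun z => (hX.meas _ _).sub (hX.meas _ _)
  have hγs : γ ≤ √(2 * d) := Real.le_sqrt_of_sq_le hγ
  have key : ∀ i, ∀ ω ∈ A, η * r ^ d * Ψ (I i ω) ≤ M γ X t ω := by
    intro i ω hω
    have c1 := hX.G_cont γ s t ω
    have e : Ψ (I i ω) = ∫ z, G γ X s t (a i + r • z) ω ∂(mu d) := by
      have := hX.cont_x t ω
      have := hX.cont_x s ω
      exact hΨ (fun z => X t (a i + r • z) ω - X s (a i + r • z) ω) (by fun_prop)
    have h1 := sub_cube c1 (fun x => (G_pos γ s t x ω).le) r0 (a i) (ha1 i)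
    rw [← e] at h1
    have h2 : η * ∫ x, G γ X s t x ω ∂(mu d) ≤ M γ X t ω := by
      rw [M, ← integral_const_mul]
      refine integral_mono_ae ((cont_int c1).const_mul _) (cont_int (hX.D_cont γ t ω)) ?_
      filter_upwards [mu_ae d] with x hx
      rw [D_mul γ s t]
      apply mul_le_mul_of_nonneg_right _ (G_pos γ s t x ω).le
      rw [D, hη, exp_le_exp]
      have h3 := (abs_le.1 (hA ω hω x hx)).1
      have h4 : γ * (-m) ≤ γ * X s x ω := mul_le_mul_of_nonneg_left h3 hγ0
      have h5 : γ * m ≤ √(2 * d) * m := mul_le_mul_of_nonneg_right hγs hm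
      have h6 : γ ^ 2 / 2 * s ≤ d * s := mul_le_mul_of_nonneg_right (by linarith) hs
      linarith
    calc η * r ^ d * Ψ (I i ω) = η * (r ^ d * Ψ (I i ω)) := by ring
      _ ≤ η * ∫ x, G γ X s t x ω ∂(mu d) := mul_le_mul_of_nonneg_left h1 η0.le
      _ ≤ _ := h2
  set S : Set (cube d → ℝ) := {f | Ψ f < (η * r ^ d)⁻¹ * b} with hS
  have mS : MeasurableSet S := measurableSet_lt mΨ measurable_const
  have sub : {ω | M γ X t ω < b} ⊆ Aᶜ ∪ ⋂ i ∈ (Finset.univ : Finset (Fin N)), I i ⁻¹' S := by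
    intro ω hω
    by_cases h : ω ∈ A
    · right
      simp only [mem_iInter]
      intro i _
      show Ψ (I i ω) < (η * r ^ d)⁻¹ * b
      rw [lt_inv_mul_iff₀ (by positivity)]
      exact (key i ω h).trans_lt hω
    · exact Or.inl h
  have pr := ind.measure_inter_preimage_eq_mul Finset.univ (sets := fun _ => S) (fun _ _ => mS)
  have pe : ∀ i, P (I i ⁻¹' S) = P {ω | M γ X (t - s) ω < (η * r ^ d)⁻¹ * b} := by
    intro i
    have := (hX.ident_scale hK hs hst (a i)).measure_mem_eq mS
    refine Eq.trans this ?_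
    congr 1
    ext ω
    have e := hΨ (fun z => X (t - s) z ω) (hX.cont_x (t - s) ω)
    show Ψ (fun z => X (t - s) z ω) < _ ↔ _
    rw [e]; rfl
  calc P {ω | M γ X t ω < b} ≤ P Aᶜ + P (⋂ i ∈ (Finset.univ : Finset (Fin N)), I i ⁻¹' S) :=
        (measure_mono sub).trans (measure_union_le _ _)
    _ ≤ _ := by
        refine add_le_add PA (le_of_eq ?_)
        refine Eq.trans pr ?_
        rw [Finset.prod_congr rfl fun i _ => pe i]
        simp

/-- zero-one type inequality -/
lemma zo (hd : 1 ≤ d) (hK : GK K R) (hX : Good P K X) {N : ℕ} (hN : 1 ≤ N) {δ : ℝ≥0∞}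
    (hδ : 0 < δ) : ∃ B : ℝ, 0 < B ∧ ∀ γ : ℝ, 0 ≤ γ → γ ^ 2 ≤ 2 * d → ∀ L : Ω → ℝ,
      (∀ᵐ ω ∂P, Tendsto (fun t : ℝ => M γ X t ω) atTop (𝓝 (L ω))) → ∀ a, 0 < a →
      P {ω | L ω < a} ≤ δ + P {ω | L ω ≤ B * a} ^ N := by
  obtain ⟨s, B, hs, hB, h⟩ := hX.zo_t hd hK hN hδ
  refine ⟨4 * B, by positivity, fun γ hγ0 hγ L hL a ha => ?_⟩
  have t1 : TendstoInMeasure P (fun (n : ℕ) => M γ X (n + s)) atTop L := by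
    refine tendstoInMeasure_of_tendsto_ae (fun n => (hX.M_meas γ _).aestronglyMeasurable) ?_
    filter_upwards [hL] with ω hω
    exact hω.comp (tendsto_atTop_add_const_right _ _ tendsto_natCast_atTop_atTop)
  have t2 : TendstoInMeasure P (fun (n : ℕ) => M γ X n) atTop L := by
    refine tendstoInMeasure_of_tendsto_ae (fun n => (hX.M_meas γ _).aestronglyMeasurable) ?_
    filter_upwards [hL] with ω hω
    exact hω.comp tendsto_natCast_atTop_atTop
  have u1 := (tendstoInMeasure_iff_dist.1 t1) a ha
  have u2 := (tendstoInMeasure_iff_dist.1 t2) (2 * B * a) (by positivity)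
  have bd : ∀ n : ℕ, P {ω | L ω < a} ≤ (δ + (P {ω | L ω ≤ 4 * B * a} +
      P {ω | 2 * B * a ≤ dist (M γ X n ω) (L ω)}) ^ N) +
      P {ω | a ≤ dist (M γ X (n + s) ω) (L ω)} := by
    intro n
    have s1 : {ω | L ω < a} ⊆ {ω | M γ X (n + s) ω < 2 * a} ∪
        {ω | a ≤ dist (M γ X (n + s) ω) (L ω)} := by
      intro ω hω
      by_contra hc
      rw [mem_union, not_or] at hc
      have c1 : ¬ (M γ X (n + s) ω < 2 * a) := hc.1
      have c2 : ¬ (a ≤ dist (M γ X (n + s) ω) (L ω)) := hc.2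
      have c3 : L ω < a := hω
      rw [Real.dist_eq, not_le, abs_lt] at c2
      linarith [c2.2]
    have s2 : {ω | M γ X n ω < B * (2 * a)} ⊆ {ω | L ω ≤ 4 * B * a} ∪
        {ω | 2 * B * a ≤ dist (M γ X n ω) (L ω)} := by
      intro ω hω
      by_contra hc
      rw [mem_union, not_or] at hc
      have c1 : ¬ (L ω ≤ 4 * B * a) := hc.1
      have c2 : ¬ (2 * B * a ≤ dist (M γ X n ω) (L ω)) := hc.2
      have c3 : M γ X n ω < B * (2 * a) := hω
      rw [Real.dist_eq, not_le, abs_lt] at c2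
      nlinarith [c2.1]
    have h3 := h γ hγ0 hγ (n + s) (by linarith [Nat.cast_nonneg (α := ℝ) n]) (2 * a)
    rw [add_sub_cancel_right] at h3
    refine ((measure_mono s1).trans (measure_union_le _ _)).trans (add_le_add_left (h3.trans ?_) _)
    gcongr
    exact (measure_mono s2).trans (measure_union_le _ _)
  have lim : Tendsto (fun n : ℕ => (δ + (P {ω | L ω ≤ 4 * B * a} +
      P {ω | 2 * B * a ≤ dist (M γ X n ω) (L ω)}) ^ N) +
      P {ω | a ≤ dist (M γ X (n + s) ω) (L ω)}) atTop
      (𝓝 ((δ + (P {ω | L ω ≤ 4 * B * a} + 0) ^ N) + 0)) :=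
    (tendsto_const_nhds.add (ENNReal.Tendsto.pow (tendsto_const_nhds.add u2))).add u1
  rw [add_zero, add_zero] at lim
  exact ge_of_tendsto' lim bd

end Good
end zeroone
end GMC

namespace GMC

open Real Set Topology
open scoped ENNReal NNReal

set_option linter.unusedSectionVars false

section final
variable {d : ℕ} {Ω : Type*} [m0 : MeasurableSpace Ω] {P : Measure Ω} [IsProbabilityMeasure P]
  {K : ℝ → EE d → ℝ} {X : ℝ → EE d → Ω → ℝ} {R : ℝ}

lemma exists_lam {L : Ω → ℝ} (mL : Measurable L) (L0 : ∀ ω, 0 ≤ L ω) (hL : ∀ᵐ ω ∂P, 0 < L ω) :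
    ∃ l : ℝ, 0 < l ∧ ∫ ω, exp (-(l * L ω)) ∂P = 1 / 2 := by
  set F : ℝ → ℝ := fun l => ∫ ω, exp (-(|l| * L ω)) ∂P with hF
  have bd : ∀ l ω, ‖exp (-(|l| * L ω))‖ ≤ 1 := by
    intro l ω
    rw [Real.norm_eq_abs, abs_of_pos (exp_pos _), exp_le_one_iff, neg_nonpos]
    exact mul_nonneg (abs_nonneg _) (L0 ω)
  have cF : Continuous F := by
    refine continuous_of_dominated (bound := fun _ => 1) ?_ ?_ (integrable_const _) ?_
    · intro l
      have : Measurable fun ω => exp (-(|l| * L ω)) := by fun_prop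
      exact this.aestronglyMeasurable
    · exact fun l => ae_of_all _ (bd l)
    · exact ae_of_all _ fun ω => by fun_prop
  have t0 : Tendsto (fun n : ℕ => F n) atTop (𝓝 0) := by
    have : Tendsto (fun n : ℕ => ∫ ω, exp (-(|(n:ℝ)| * L ω)) ∂P) atTop (𝓝 (∫ ω, 0 ∂P)) := by
      refine tendsto_integral_of_dominated_convergence (fun _ => 1) ?_ (integrable_const _)
        (fun n => ae_of_all _ (bd n)) ?_
      · intro l
        have : Measurable fun ω => exp (-(|(l:ℝ)| * L ω)) := by fun_prop
        exact this.aestronglyMeasurable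
      · filter_upwards [hL] with ω hω
        refine tendsto_exp_neg_atTop_nhds_zero.comp ?_
        simp only [Nat.abs_cast]
        exact tendsto_natCast_atTop_atTop.atTop_mul_const hω
    simpa only [integral_zero] using this
  obtain ⟨n, hn⟩ := (t0.eventually (eventually_lt_nhds (show (0:ℝ) < 1 / 2 by norm_num))).exists
  have F0 : F 0 = 1 := by simp [hF]
  obtain ⟨l, hl, e⟩ := intermediate_value_Icc' (Nat.cast_nonneg (α := ℝ) n) cF.continuousOn
    (show (1 / 2 : ℝ) ∈ Icc (F n) (F 0) from ⟨hn.le, by rw [F0]; norm_num⟩)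
  have l0 : 0 < l := by
    rcases hl.1.eq_or_lt with h | h
    · rw [← h, F0] at e; norm_num at e
    · exact h
  refine ⟨l, l0, ?_⟩
  simpa only [hF, abs_of_pos l0] using e

namespace Good

lemma pos (hd : 1 ≤ d) (hK : GK K R) (hX : Good P K X) {γ : ℝ} (hγ0 : 0 ≤ γ) (hγ : γ ^ 2 ≤ 2 * d)
    {L : Ω → ℝ} (mL : Measurable L) (L0 : ∀ ω, 0 ≤ L ω)
    (hL : ∀ᵐ ω ∂P, Tendsto (fun t : ℝ => M γ X t ω) atTop (𝓝 (L ω)))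
    (h1 : P {ω | L ω = 0} < 1) : ∀ᵐ ω ∂P, 0 < L ω := by
  set q := P {ω | L ω = 0} with hq
  have step : ∀ δ : ℝ≥0∞, 0 < δ → q ≤ δ + q ^ 2 := by
    intro δ hδ
    obtain ⟨B, hB, h⟩ := hX.zo hd hK (N := 2) (by norm_num) hδ
    have b : ∀ n : ℕ, q ≤ δ + P {ω | L ω ≤ B * (1 / ((n:ℝ) + 1))} ^ 2 := by
      intro n
      refine le_trans (measure_mono ?_) (h γ hγ0 hγ L hL (1 / ((n:ℝ) + 1)) (by positivity))
      intro ω hω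
      have : L ω = 0 := hω
      show L ω < _
      rw [this]; positivity
    have t := tendsto_measure_iInter_atTop (μ := P)
      (s := fun n : ℕ => {ω | L ω ≤ B * (1 / ((n:ℝ) + 1))})
      (fun n => (measurableSet_le mL measurable_const).nullMeasurableSet) (by
        intro m n hmn ω hω
        have hω' : L ω ≤ B * (1 / ((n:ℝ) + 1)) := hω
        refine le_trans hω' ?_
        have : (m:ℝ) ≤ n := by exact_mod_cast hmn
        gcongr) ⟨0, measure_ne_top _ _⟩
    have e : ⋂ n : ℕ, {ω | L ω ≤ B * (1 / ((n:ℝ) + 1))} = {ω | L ω = 0} := by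
      apply Subset.antisymm
      · intro ω hω
        have hω' : ∀ n : ℕ, L ω ≤ B * (1 / ((n:ℝ) + 1)) := fun n => mem_iInter.1 hω n
        have : Tendsto (fun n : ℕ => B * (1 / ((n:ℝ) + 1))) atTop (𝓝 (B * 0)) :=
          tendsto_one_div_add_atTop_nhds_zero_nat.const_mul B
        rw [mul_zero] at this
        exact le_antisymm (ge_of_tendsto' this hω') (L0 ω)
      · intro ω hω
        have h0 : L ω = 0 := hω
        refine mem_iInter.2 fun n => ?_
        show L ω ≤ _
        rw [h0]; positivity
    rw [e] at t
    exact ge_of_tendsto' (tendsto_const_nhds.add (ENNReal.Tendsto.pow t)) b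
  have qq : q ≤ q ^ 2 := by
    refine ENNReal.le_of_forall_pos_le_add fun ε hε _ => ?_
    rw [add_comm]
    exact step ε (by exact_mod_cast hε)
  have q0 : q = 0 := by
    by_contra hne
    have h2 : q * q < q * 1 := ENNReal.mul_lt_mul_right hne (measure_ne_top _ _) h1
    rw [mul_one, ← sq] at h2
    exact absurd qq (not_le.2 h2)
  have : ∀ᵐ ω ∂P, ¬ (L ω = 0) := by
    rw [ae_iff]; simpa only [not_not] using q0
  filter_upwards [this] with ω hω
  exact lt_of_le_of_ne (L0 ω) (Ne.symm hω)

/-- tightness -/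
lemma tight (hd : 1 ≤ d) (hK : GK K R) (hX : Good P K X) {ε : ℝ≥0∞} (hε : 0 < ε) :
    ∃ A : ℝ, ∀ γ : ℝ, 0 ≤ γ → γ ^ 2 ≤ 2 * d → ∀ L : Ω → ℝ, Measurable L → (∀ ω, 0 ≤ L ω) →
      (∀ᵐ ω ∂P, Tendsto (fun t : ℝ => M γ X t ω) atTop (𝓝 (L ω))) → ∀ l : ℝ, 0 < l →
      ∫ ω, exp (-(l * L ω)) ∂P = 1 / 2 → P {ω | A < l * L ω} ≤ ε := by
  wlog hε1 : ε ≤ 1 generalizing ε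
  · obtain ⟨A, hA⟩ := this (ε := 1) one_pos le_rfl
    refine ⟨A, fun γ a b L c e f l g h => (hA γ a b L c e f l g h).trans (not_le.1 hε1).le⟩
  set e : ℝ := ε.toReal with he
  have e0 : 0 < e := ENNReal.toReal_pos hε.ne' (ne_top_of_le_ne_top ENNReal.one_ne_top hε1)
  have e1 : e ≤ 1 := by
    have := ENNReal.toReal_mono ENNReal.one_ne_top hε1
    simpa using this
  obtain ⟨N, hN⟩ := exists_pow_lt_of_lt_one (show (0:ℝ) < 1 / 8 by norm_num)
    (show 1 - e < 1 by linarith)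
  have hN1 : 1 ≤ N := by
    by_contra h
    have : N = 0 := by omega
    rw [this] at hN; norm_num at hN
  obtain ⟨B, hB, h⟩ := hX.zo hd hK hN1 (δ := ENNReal.ofReal (1 / 8)) (by simp)
  refine ⟨B * 3, fun γ hγ0 hγ L mL L0 hL l hl hhalf => ?_⟩
  by_contra hc
  rw [not_le] at hc
  have mS : MeasurableSet {ω | B * 3 < l * L ω} := measurableSet_lt measurable_const (mL.const_mul l)
  have r1 : e ≤ P.real {ω | B * 3 < l * L ω} :=
    ENNReal.toReal_mono (measure_ne_top _ _) hc.le
  have r2 : P.real {ω | L ω ≤ B * (3 / l)} ≤ 1 - e := by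
    have : {ω | L ω ≤ B * (3 / l)} = {ω | B * 3 < l * L ω}ᶜ := by
      ext ω
      show L ω ≤ B * (3 / l) ↔ ¬ (B * 3 < l * L ω)
      rw [not_lt, ← mul_div_assoc, le_div_iff₀ hl, mul_comm l]
    rw [this, probReal_compl_eq_one_sub mS]
    linarith
  have r3 := h γ hγ0 hγ L hL (3 / l) (by positivity)
  have r4 : P.real {ω | L ω < 3 / l} ≤ 1 / 8 + P.real {ω | L ω ≤ B * (3 / l)} ^ N := by
    have := ENNReal.toReal_mono (by finiteness) r3
    rw [ENNReal.toReal_add (by finiteness) (by finiteness), ENNReal.toReal_pow,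
      ENNReal.toReal_ofReal (by norm_num)] at this
    exact this
  have r5 : P.real {ω | L ω ≤ B * (3 / l)} ^ N ≤ (1 - e) ^ N :=
    pow_le_pow_left₀ measureReal_nonneg r2 N
  have mT : MeasurableSet {ω | L ω < 3 / l} := measurableSet_lt mL measurable_const
  have e3 : exp (-3) ≤ 1 / 4 := by
    rw [exp_neg, one_div]
    apply inv_anti₀ (by norm_num)
    have := add_one_le_exp (3:ℝ)
    linarith
  have r6 : ∫ ω, exp (-(l * L ω)) ∂P ≤
      ∫ ω, ({ω | L ω < 3 / l}.indicator (fun _ => (1:ℝ)) ω + exp (-3)) ∂P := by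
    have i1 : Integrable (fun ω => {ω | L ω < 3 / l}.indicator (fun _ => (1:ℝ)) ω + exp (-3)) P :=
      ((integrable_const (1:ℝ)).indicator mT).add (integrable_const _)
    refine integral_mono_of_nonneg (ae_of_all _ fun ω => (exp_pos _).le) i1 (ae_of_all _ fun ω => ?_)
    by_cases hω : L ω < 3 / l
    · have hm : ω ∈ {ω | L ω < 3 / l} := hω
      show exp (-(l * L ω)) ≤ {ω | L ω < 3 / l}.indicator (fun _ => (1:ℝ)) ω + exp (-3)
      rw [indicator_of_mem hm]
      have : exp (-(l * L ω)) ≤ 1 := by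
        rw [exp_le_one_iff, neg_nonpos]; exact mul_nonneg hl.le (L0 ω)
      linarith [exp_pos (-3 : ℝ)]
    · have hm : ω ∉ {ω | L ω < 3 / l} := hω
      show exp (-(l * L ω)) ≤ {ω | L ω < 3 / l}.indicator (fun _ => (1:ℝ)) ω + exp (-3)
      rw [indicator_of_notMem hm, zero_add, exp_le_exp, neg_le_neg_iff, mul_comm]
      rw [not_lt, div_le_iff₀ hl] at hω
      exact hω
  rw [integral_add ((integrable_const (1:ℝ)).indicator mT) (integrable_const _),
    integral_indicator_const _ mT, integral_const, hhalf] at r6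
  simp only [smul_eq_mul, mul_one, probReal_univ, one_mul] at r6
  linarith

end Good
end final
end GMC

theorem subcritical_rescaled_limit_exists
    {d : ℕ} (hd : 1 ≤ d)
    {Ω : Type*} [m0 : MeasurableSpace Ω] (P : Measure Ω) [IsProbabilityMeasure P]
    (k : EuclideanSpace ℝ (Fin d) → ℝ)
    (hk1 : ContDiff ℝ 1 k) (hk0 : k 0 = 1) (hkb : ∀ z, |k z| ≤ 1)
    (hksupp : HasCompactSupport k)
    (hkpd : ∀ (n : ℕ) (z : Fin n → EuclideanSpace ℝ (Fin d)) (c : Fin n → ℝ),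
      0 ≤ ∑ i, ∑ j, c i * c j * k (z i - z j))
    (X : ℝ → EuclideanSpace ℝ (Fin d) → Ω → ℝ)
    (hXmeas : ∀ t x, Measurable (X t x))
    (hXgauss : ∀ (n : ℕ) (c : Fin n → ℝ) (t : Fin n → ℝ)
        (x : Fin n → EuclideanSpace ℝ (Fin d)),
      ∃ v : NNReal,
        Measure.map (fun ω => ∑ i, c i * X (t i) (x i) ω) P = gaussianReal 0 v)
    (hXcent : ∀ t x, ∫ ω, X t x ω ∂P = 0)
    (hXcov : ∀ t, 0 ≤ t → ∀ x y : EuclideanSpace ℝ (Fin d),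
      ∫ ω, X t x ω * X t y ω ∂P = ∫ u in Set.Icc (1:ℝ) (Real.exp t), k (u • (x - y)) / u)
    (hXcont : ∀ᵐ ω ∂P, Continuous fun p : ℝ × EuclideanSpace ℝ (Fin d) => X p.1 p.2 ω)
    (hXindep : ∀ s t : ℝ, 0 ≤ s → s < t →
      Indep (⨆ x : EuclideanSpace ℝ (Fin d),
          MeasurableSpace.comap (fun ω => X t x ω - X s x ω) inferInstance)
        (⨆ u ∈ Set.Icc (0:ℝ) s, ⨆ x : EuclideanSpace ℝ (Fin d),
          MeasurableSpace.comap (X u x) inferInstance) P)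
    :
    ∃ (γ lam : ℕ → ℝ) (Mlim : ℕ → Ω → ℝ) (ν : Measure ℝ),
      StrictMono γ ∧
      (∀ n, γ n ^ 2 < 2 * (d:ℝ)) ∧
      (∀ n, 0 < lam n) ∧
      Tendsto γ atTop (nhds (Real.sqrt (2 * (d:ℝ)))) ∧
      (∀ n, ∀ᵐ ω ∂P, Tendsto (fun t : ℝ =>
          ∫ x in {x : EuclideanSpace ℝ (Fin d) | ∀ i, x i ∈ Set.Icc (0:ℝ) 1},
            Real.exp (γ n * X t x ω - γ n ^ 2 / 2 * t))
        atTop (nhds (Mlim n ω))) ∧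
      IsProbabilityMeasure ν ∧
      (∀ f : BoundedContinuousFunction ℝ ℝ,
        Tendsto (fun n => ∫ ω, f (lam n * Mlim n ω) ∂P) atTop (nhds (∫ x, f x ∂ν))) ∧
      ν ≠ Measure.dirac 0 ∧
      ∫ x, Real.exp (-x) ∂ν = 1 / 2 := by
  classical
  obtain ⟨R, hK⟩ := GMC.gk_of hk1.continuous hk0 hkb hksupp
  obtain ⟨Y, hY, hYX⟩ := GMC.reduce (P := P) (k := k) (X := X) hXmeas hXgauss hXcent hXcov hXcont hXindep
  have hd' : (1:ℝ) ≤ d := by exact_mod_cast hd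
  set c : ℝ := Real.sqrt (2 * (d:ℝ)) with hc
  have c0 : 0 < c := Real.sqrt_pos.2 (by linarith)
  have c2 : c ^ 2 = 2 * (d:ℝ) := Real.sq_sqrt (by linarith)
  set g : ℕ → ℝ := fun n => c * (1 - 1 / ((n:ℝ) + 1 + 1)) with hg
  have u0 : ∀ n : ℕ, 0 < 1 / ((n:ℝ) + 1 + 1) := fun n => by positivity
  have u1 : ∀ n : ℕ, 1 / ((n:ℝ) + 1 + 1) < 1 := fun n => by
    rw [div_lt_one (by positivity)]
    linarith [Nat.cast_nonneg (α := ℝ) n]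
  have g0 : ∀ n, 0 ≤ g n := fun n => mul_nonneg c0.le (by linarith [u1 n])
  have gc : ∀ n, g n < c := fun n => by
    have : c * (1 - 1 / ((n:ℝ) + 1 + 1)) < c * 1 := by
      apply mul_lt_mul_of_pos_left _ c0
      linarith [u0 n]
    rwa [mul_one] at this
  have g2 : ∀ n, g n ^ 2 < 2 * (d:ℝ) := fun n => by
    rw [← c2]
    exact pow_lt_pow_left₀ (gc n) (g0 n) (by norm_num)
  have gm : StrictMono g := by
    apply strictMono_nat_of_lt_succ
    intro n
    apply mul_lt_mul_of_pos_left _ c0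
    have : 1 / (((n + 1 : ℕ):ℝ) + 1 + 1) < 1 / ((n:ℝ) + 1 + 1) := by
      apply one_div_lt_one_div_of_lt (by positivity)
      push_cast; linarith
    linarith
  have gt : Tendsto g atTop (nhds c) := by
    have h1 : Tendsto (fun n : ℕ => 1 / (((n + 1 : ℕ):ℝ) + 1)) atTop (nhds 0) :=
      (tendsto_add_atTop_iff_nat 1).2 tendsto_one_div_add_atTop_nhds_zero_nat
    have h2 : Tendsto (fun n : ℕ => c * (1 - 1 / (((n + 1 : ℕ):ℝ) + 1))) atTop
        (nhds (c * (1 - 0))) := (h1.const_sub 1).const_mul c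
    simpa [hg] using h2
  choose L mL L0 hL hL1 using fun n => hY.lim_exists hK (g n) (g2 n)
  have Lpos : ∀ n, ∀ᵐ ω ∂P, 0 < L n ω := fun n =>
    hY.pos hd hK (g0 n) (g2 n).le (mL n) (L0 n) (hL n) (hL1 n)
  choose l l0 hl using fun n => GMC.exists_lam (mL n) (L0 n) (Lpos n)
  have ml : ∀ n, Measurable fun ω => l n * L n ω := fun n => (mL n).const_mul _
  let μ : ℕ → ProbabilityMeasure ℝ := fun n =>
    ⟨P.map (fun ω => l n * L n ω), Measure.isProbabilityMeasure_map (ml n).aemeasurable⟩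
  have tight : IsTightMeasureSet
      {((m : ProbabilityMeasure ℝ) : Measure ℝ) | m ∈ Set.range μ} := by
    rw [isTightMeasureSet_iff_exists_isCompact_measure_compl_le]
    intro ε hε
    obtain ⟨A, hA⟩ := hY.tight hd hK hε
    refine ⟨Set.Icc 0 A, isCompact_Icc, ?_⟩
    rintro _ ⟨_, ⟨n, rfl⟩, rfl⟩
    show P.map (fun ω => l n * L n ω) (Set.Icc 0 A)ᶜ ≤ ε
    rw [Measure.map_apply (ml n) measurableSet_Icc.compl]
    refine le_trans (measure_mono ?_)
      (hA (g n) (g0 n) (g2 n).le (L n) (mL n) (L0 n) (hL n) (l n) (l0 n) (hl n))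
    intro ω hω
    show A < l n * L n ω
    by_contra h
    exact hω ⟨mul_nonneg (l0 n).le (L0 n ω), not_lt.1 h⟩
  obtain ⟨ν, -, φ, hφ, hν⟩ := (isCompact_closure_of_isTightMeasureSet tight).tendsto_subseq
    (x := μ) (fun n => subset_closure (Set.mem_range_self n))
  have conv : ∀ f : BoundedContinuousFunction ℝ ℝ,
      Tendsto (fun n => ∫ ω, f (l (φ n) * L (φ n) ω) ∂P) atTop
        (nhds (∫ x, f x ∂(ν : Measure ℝ))) := by
    intro f
    have h := ProbabilityMeasure.tendsto_iff_forall_integral_tendsto.1 hν f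
    refine h.congr fun n => ?_
    exact integral_map (ml (φ n)).aemeasurable f.continuous.aestronglyMeasurable
  have nonneg : ∀ᵐ x ∂(ν : Measure ℝ), 0 ≤ x := by
    have h := ProbabilityMeasure.le_liminf_measure_open_of_tendsto hν (isOpen_Iio (a := (0:ℝ)))
    have h0 : ∀ n, ((μ ∘ φ) n : Measure ℝ) (Set.Iio 0) = 0 := by
      intro n
      show P.map (fun ω => l (φ n) * L (φ n) ω) (Set.Iio 0) = 0
      rw [Measure.map_apply (ml _) measurableSet_Iio]
      have : (fun ω => l (φ n) * L (φ n) ω) ⁻¹' Set.Iio 0 = ∅ := by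
        ext ω
        simp only [Set.mem_preimage, Set.mem_Iio, Set.mem_empty_iff_false, iff_false, not_lt]
        exact mul_nonneg (l0 _).le (L0 _ ω)
      rw [this, measure_empty]
    simp only [h0, liminf_const, nonpos_iff_eq_zero] at h
    rw [ae_iff]
    simp only [not_le]
    exact h
  have int : ∫ x, Real.exp (-x) ∂(ν : Measure ℝ) = 1 / 2 := by
    let F : BoundedContinuousFunction ℝ ℝ := BoundedContinuousFunction.ofNormedAddCommGroup
      (fun x : ℝ => Real.exp (-|x|)) (by fun_prop) 1 (fun x => by
        rw [Real.norm_eq_abs, abs_of_pos (Real.exp_pos _), Real.exp_le_one_iff, neg_nonpos]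
        exact abs_nonneg x)
    have h := conv F
    have e1 : ∀ n, ∫ ω, F (l (φ n) * L (φ n) ω) ∂P = 1 / 2 := by
      intro n
      rw [← hl (φ n)]
      refine integral_congr_ae (ae_of_all _ fun ω => ?_)
      show Real.exp (-|l (φ n) * L (φ n) ω|) = _
      rw [abs_of_nonneg (mul_nonneg (l0 _).le (L0 _ ω))]
    simp only [e1] at h
    rw [tendsto_nhds_unique tendsto_const_nhds h]
    refine integral_congr_ae ?_
    filter_upwards [nonneg] with x hx
    show _ = Real.exp (-|x|)
    rw [abs_of_nonneg hx]
  refine ⟨g ∘ φ, l ∘ φ, fun n => L (φ n), ν, gm.comp hφ, fun n => g2 _, fun n => l0 _,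
    gt.comp hφ.tendsto_atTop, ?_, inferInstance, conv, ?_, int⟩
  · intro n
    filter_upwards [hL (φ n), hYX] with ω hω hω2
    refine hω.congr fun t => ?_
    simp only [GMC.M, GMC.D, hω2]
    rfl
  · intro h
    rw [h, integral_dirac] at int
    norm_num at int
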